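/- arXiv:math/0702516 — 2 statements merged into one kernel-verified Lean document; each statement's English description precedes it below -/
import Mathlib

section
/- Let q = 2h+3 with h ≥ 1, λ = 2cos(π/q), ρ = (λ − 2 + √(λ² − 4λ + 8))/2, and 1/2 ≤ α < ρ/λ. With the numbers H_1, …, H_{4h+3} given by H_{4n} = B_n/B_{n+1}, H_{4n−2} = (B_{n−1}+B_n)/(B_n+B_{n+1}), H_{4h+3−4n} = (B_{n+1}ρ − B_n)/(B_nρ − B_{n−1}), H_{4h+1−4n} = (B_{n+1}ρ − B_{n+2})/(B_nρ − B_{n+1}), let Ω_α = ⋃_{n=1}^{4h+3} J_n × [0, H_n] with J_{4n−3} = [ℓ_{n−1}, r_{h+n}), J_{4n−2} = [r_{h+n}, ℓ_{h+n}), J_{4n−1} = [ℓ_{h+n}, r_n), J_{4n} = [r_n, ℓ_n) for n = 1, …, h, J_{4h+1} = [ℓ_h, r_{2h+1}), J_{4h+2} = [r_{2h+1}, ℓ_{2h+1}), and J_{4h+3} = [ℓ_{2h+1}, r_0). Then the map 𝒯_α(x,y) = (T_α(x), 1/(d(x)λ + ε(x)y)) maps Ω_α to Ω_α and is bijective off of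 a set of two-dimensional Lebesgue measure zero. -/
open Set MeasureTheory

/-- The digit function `d(x) = ⌊|1/(xλ)| + 1 - α⌋` of the α-Rosen continued fraction. -/
noncomputable def dfun (lam α x : ℝ) : ℤ := ⌊|1 / (x * lam)| + 1 - α⌋

/-- The α-Rosen continued fraction map `T_α`. -/
noncomputable def Tmap (lam α x : ℝ) : ℝ :=
  if x = 0 then 0 else |1 / x| - lam * (dfun lam α x : ℝ)

/-- The two-dimensional natural extension map `𝒯_α(x, y) = (T_α(x), 1/(d(x)λ + ε(x)y))`. -/
noncomputable def Tnat (lam α : ℝ) (z : ℝ × ℝ) : ℝ × ℝ :=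
  (Tmap lam α z.1, 1 / ((dfun lam α z.1 : ℝ) * lam + Real.sign z.1 * z.2))

/-!
Write `t = T_α x` and `d = d(x)`, so that `𝒯_α (x, y) = (t, 1/w)` with `w = dλ ± y`. For fixed `t`,
bijectivity therefore means that, as `d` and the sign vary and `y` runs through the fibre over
`x = ±1/(dλ + t)`, the values `w` tile the half-line `w ≥ 1/f t`, where `f` is the height function.
Successive tiles abut exactly if the height over `1/(dλ + t)` and the height over
`-1/((d+1)λ + t)` add up to `λ`.

Both the orbits of the endpoints and the heights are governed by the recurrence
`B_{n+2} = λ B_{n+1} - B_n` and the symmetry `B_{h+2} = B_{h+1}`: every breakpoint `p_{k+4}` is the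
image of `p_k` under `x ↦ -1/x - λ`, and `1/H_{k+4} = λ - H_k`. This settles the tilings with least
digit `1`; the first three intervals have least digit `2`, and there the tiling reduces, through
`H_{4h+1} = λ - ρ` and `H_{4h+3} = ρ`, to `ρ² + (2 - λ)ρ = 1`.
-/

section RosenMap

variable {lam α : ℝ}

/-- The interval `[λ(α-1), λα)` on which `T_α` acts, half-open so that its translates by `λ`
tile the line. -/
def rosenInterval (lam α : ℝ) : Set ℝ := Ico ((α - 1) * lam) (α * lam)

theorem dfun_eq_iff (hlam : 0 < lam) {x : ℝ} {d : ℤ} :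
    dfun lam α x = d ↔ |1 / x| - d * lam ∈ rosenInterval lam α := by
  have habs : |1 / (x * lam)| = |1 / x| / lam := by
    rw [← div_div, abs_div, abs_of_pos hlam]
  rw [dfun, Int.floor_eq_iff, habs, rosenInterval, mem_Ico, ← sub_nonneg,
    ← mul_nonneg_iff_of_pos_right hlam, ← sub_pos (b := _ + 1 - α),
    ← mul_pos_iff_of_pos_right hlam, ← sub_nonneg (b := (α - 1) * lam), ← sub_pos (a := α * lam)]
  have hdiv : |1 / x| / lam * lam = |1 / x| := div_mul_cancel₀ _ hlam.ne'
  constructor <;> rintro ⟨h₁, h₂⟩ <;> constructor <;> linarith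

theorem Tmap_of_ne_zero {x : ℝ} (hx : x ≠ 0) :
    Tmap lam α x = |1 / x| - dfun lam α x * lam := by
  rw [Tmap, if_neg hx, mul_comm]

theorem Tmap_mem_rosenInterval (hlam : 0 < lam) {x : ℝ} (hx : x ≠ 0) :
    Tmap lam α x ∈ rosenInterval lam α :=
  Tmap_of_ne_zero (lam := lam) (α := α) hx ▸ (dfun_eq_iff hlam).1 rfl

theorem eq_sign_div_dfun_add_Tmap (x : ℝ) :
    x = Real.sign x / (dfun lam α x * lam + Tmap lam α x) := by
  rcases lt_trichotomy x 0 with hx | rfl | hx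
  · rw [Tmap_of_ne_zero hx.ne, add_sub_cancel, Real.sign_of_neg hx,
      abs_of_neg (one_div_neg.2 hx), neg_div_neg_eq, one_div_one_div]
  · rw [Real.sign_zero, zero_div]
  · rw [Tmap_of_ne_zero hx.ne', add_sub_cancel, Real.sign_of_pos hx,
      abs_of_pos (one_div_pos.2 hx), one_div_one_div]

theorem countable_preimage_Tmap {E : Set ℝ} (hE : E.Countable) :
    (Tmap lam α ⁻¹' E).Countable := by
  have hsign : ({-1, 0, 1} : Set ℝ).Countable := (toFinite _).countable
  refine ((hsign.prod (countable_univ (α := ℤ))).image2 hE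
    fun s t ↦ s.1 / (s.2 * lam + t)).mono fun x hx ↦ ?_
  refine ⟨(Real.sign x, dfun lam α x), ⟨?_, mem_univ _⟩, Tmap lam α x, hx,
    (eq_sign_div_dfun_add_Tmap x).symm⟩
  rcases Real.sign_apply_eq x with hs | hs | hs <;> simp [hs]

theorem digit_mul_add_pos (hα : 0 < α) (hlam : 0 < lam) {d : ℤ} (hd : 1 ≤ d) {t : ℝ}
    (ht : t ∈ rosenInterval lam α) : 0 < d * lam + t := by
  have hd' : lam ≤ d * lam := le_mul_of_one_le_left hlam.le (by exact_mod_cast hd)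
  linarith [ht.1, mul_pos hα hlam]

theorem one_le_dfun (hlam : 0 < lam) (hα : 1 / 2 ≤ α) (hαlam : α * lam < 1) {x : ℝ}
    (hx : x ∈ rosenInterval lam α) (hx0 : x ≠ 0) : 1 ≤ dfun lam α x := by
  have habs : |x| < 1 := abs_lt.2 ⟨by nlinarith [hx.1], hx.2.trans hαlam⟩
  have hinv : 1 < |1 / x| := by
    rwa [abs_div, abs_one, lt_div_iff₀ (abs_pos.2 hx0), one_mul]
  have hT := (Tmap_mem_rosenInterval (α := α) hlam hx0).2
  rw [Tmap_of_ne_zero hx0] at hT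
  have hpos : (0 : ℝ) < dfun lam α x := pos_of_mul_pos_left (b := lam) (by linarith) hlam.le
  exact_mod_cast hpos

theorem dfun_eq_and_Tmap_eq (hlam : 0 < lam) {x t : ℝ} {d : ℤ}
    (ht : t ∈ rosenInterval lam α) (hx0 : x ≠ 0) (hx : |1 / x| = d * lam + t) :
    dfun lam α x = d ∧ Tmap lam α x = t := by
  have hd : dfun lam α x = d := (dfun_eq_iff hlam).2 (by rwa [hx, add_sub_cancel_left])
  exact ⟨hd, by rw [Tmap_of_ne_zero hx0, hd, hx, add_sub_cancel_left]⟩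

theorem Tmap_eq_of_neg (hlam : 0 < lam) {x t : ℝ} {d : ℤ} (ht : t ∈ rosenInterval lam α)
    (hx : x < 0) (h : -1 / x = d * lam + t) : Tmap lam α x = t :=
  (dfun_eq_and_Tmap_eq hlam ht hx.ne (by rw [abs_of_neg (one_div_neg.2 hx), ← h, neg_div])).2

theorem Tmap_eq_of_pos (hlam : 0 < lam) {x t : ℝ} {d : ℤ} (ht : t ∈ rosenInterval lam α)
    (hx : 0 < x) (h : 1 / x = d * lam + t) : Tmap lam α x = t :=
  (dfun_eq_and_Tmap_eq hlam ht hx.ne' (by rw [abs_of_pos (one_div_pos.2 hx), ← h])).2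

/-- The inverse branch of `𝒯_α` with sign `ε` and digit `d`, evaluated at `(t, 1/w)`. -/
noncomputable def inverseBranch (lam ε : ℝ) (d : ℤ) (t w : ℝ) : ℝ × ℝ :=
  (ε / (d * lam + t), ε * (w - d * lam))

theorem Tnat_inverseBranch (hlam : 0 < lam) (hα : 0 < α) {ε t w : ℝ} {d : ℤ}
    (hε : ε = 1 ∨ ε = -1) (hd : 1 ≤ d) (ht : t ∈ rosenInterval lam α) :
    Tnat lam α (inverseBranch lam ε d t w) = (t, 1 / w) := by
  have hpos := digit_mul_add_pos hα hlam hd ht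
  have habs : |1 / (ε / (d * lam + t))| = d * lam + t := by
    rcases hε with rfl | rfl <;> simp [abs_div, abs_of_pos hpos]
  have hsign : Real.sign (ε / (d * lam + t)) = ε := by
    rcases hε with rfl | rfl
    · exact Real.sign_of_pos (by positivity)
    · exact Real.sign_of_neg (div_neg_of_neg_of_pos (by norm_num) hpos)
  have hε0 : ε ≠ 0 := by rcases hε with rfl | rfl <;> norm_num
  have hεε : ε * ε = 1 := by rcases hε with rfl | rfl <;> norm_num
  obtain ⟨hd', hT⟩ := dfun_eq_and_Tmap_eq hlam ht (div_ne_zero hε0 hpos.ne') habs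
  rw [inverseBranch, Tnat, hd', hT, hsign, ← mul_assoc, hεε, one_mul, add_sub_cancel]

theorem Tmap_inverseBranch (hlam : 0 < lam) (hα : 0 < α) {ε t : ℝ} {d : ℤ}
    (hε : ε = 1 ∨ ε = -1) (hd : 1 ≤ d) (ht : t ∈ rosenInterval lam α) :
    Tmap lam α (ε / (d * lam + t)) = t :=
  congrArg Prod.fst (Tnat_inverseBranch (w := 0) hlam hα hε hd ht)

end RosenMap

theorem volume_preimage_fst_union_preimage_snd_eq_zero {X Y : Set ℝ} (hX : X.Countable)
    (hY : Y.Countable) :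
    volume ((Prod.fst ⁻¹' X ∪ Prod.snd ⁻¹' Y : Set (ℝ × ℝ))) = 0 :=
  measure_union_null (Measure.quasiMeasurePreserving_fst.preimage_null (hX.measure_zero _))
    (Measure.quasiMeasurePreserving_snd.preimage_null (hY.measure_zero _))

section Criterion

theorem int_eq_of_abs_mul_sub_mul_lt {c : ℝ} (hc : 0 < c) {m n : ℤ}
    (h : |m * c - n * c| < c) : m = n := by
  rw [← sub_mul, abs_mul, abs_of_pos hc, mul_lt_iff_lt_one_left hc] at h
  exact sub_eq_zero.1 (Int.abs_lt_one_iff.1 (by exact_mod_cast h))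

variable {lam α : ℝ} {f : ℝ → ℝ} {E : Set ℝ} {t : ℝ} {δ : ℤ}

/-- The region `{(x, y) | x ∈ [λ(α-1), λα), 0 ≤ y ≤ f x}` below a height function `f`. -/
def heightRegion (lam α : ℝ) (f : ℝ → ℝ) : Set (ℝ × ℝ) :=
  {z | z.1 ∈ rosenInterval lam α ∧ z.2 ∈ Icc 0 (f z.1)}

/-- The preimages `(±1/(dλ+t), y)` under `𝒯_α` of points over `t` have second image coordinate
`1/w` with `w = dλ ± y`. The conditions say that, for `y` between `0` and the height, these `w`
tile the half-line `w ≥ 1/f t`, and that `δ` is the least digit which occurs. -/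
structure IsFibreTiling (lam α : ℝ) (f : ℝ → ℝ) (t : ℝ) (δ : ℤ) : Prop where
  one_le : 1 ≤ δ
  le_of_le : ∀ d : ℤ, 1 ≤ d → 1 / (d * lam + t) ≤ α * lam → δ ≤ d
  bottom : 1 / f t = δ * lam - f (-1 / (δ * lam + t))
  adjacent : ∀ d : ℤ, δ ≤ d → f (1 / (d * lam + t)) + f (-1 / ((d + 1) * lam + t)) = lam

/-- A height function on `[λ(α-1), λα)`, extended by zero, all of whose fibres are tiled except
over the exceptional set `E`. -/
structure IsHeightFunction (lam α : ℝ) (f : ℝ → ℝ) (E : Set ℝ) : Prop where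
  lam_pos : 0 < lam
  half_le : 1 / 2 ≤ α
  mul_lt_one : α * lam < 1
  pos_iff : ∀ x, 0 < f x ↔ x ∈ rosenInterval lam α
  nonneg : ∀ x, 0 ≤ f x
  lt_lam : ∀ x, f x < lam
  exists_isFibreTiling : ∀ t ∈ rosenInterval lam α, t ∉ E → ∃ δ, IsFibreTiling lam α f t δ

/-- The part of `heightRegion` on which `𝒯_α` is injective: exceptional fibres and lower edges are
removed, and upper edges are kept only over negative `x`, so that abutting images are disjoint. -/
def injectivityRegion (lam α : ℝ) (f : ℝ → ℝ) (E : Set ℝ) : Set (ℝ × ℝ) :=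
  {z | z.1 ≠ 0 ∧ Tmap lam α z.1 ∉ E ∧ 0 < z.2 ∧ z.2 ≤ f z.1 ∧ (0 < z.1 → z.2 < f z.1)}

theorem volume_heightRegion_diff_injectivityRegion (hE : E.Countable)
    (hfr : (range f).Countable) :
    volume (heightRegion lam α f \ injectivityRegion lam α f E) = 0 := by
  refine measure_mono_null ?_ (volume_preimage_fst_union_preimage_snd_eq_zero
    ((countable_singleton 0).union (countable_preimage_Tmap (lam := lam) (α := α) hE))
    ((countable_singleton 0).union hfr))
  rintro ⟨x, y⟩ ⟨⟨-, hy0, hyf⟩, hz⟩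
  contrapose! hz
  simp only [mem_union, mem_preimage, mem_singleton_iff, not_or] at hz
  obtain ⟨⟨hx0, hxE⟩, hyne, hyr⟩ := hz
  have hlt : y < f x := hyf.lt_of_ne fun h ↦ hyr ⟨x, h.symm⟩
  exact ⟨hx0, hxE, hy0.lt_of_ne' hyne, hyf, fun _ ↦ hlt⟩

namespace IsHeightFunction

variable (hf : IsHeightFunction lam α f E)

include hf

theorem alpha_pos : 0 < α := by linarith [hf.half_le]

theorem injectivityRegion_subset : injectivityRegion lam α f E ⊆ heightRegion lam α f :=
  fun z ⟨_, _, hy, hyf, _⟩ ↦ ⟨(hf.pos_iff z.1).1 (hy.trans_le hyf), hy.le, hyf⟩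

theorem exists_eq_inverseBranch {z : ℝ × ℝ} (hz : z ∈ injectivityRegion lam α f E) :
    ∃ (ε : ℝ) (d : ℤ) (t w : ℝ), (ε = 1 ∨ ε = -1) ∧ 1 ≤ d ∧ t ∈ rosenInterval lam α ∧ t ∉ E ∧
      z = inverseBranch lam ε d t w := by
  have hε : Real.sign z.1 = 1 ∨ Real.sign z.1 = -1 :=
    (Real.sign_apply_eq_of_ne_zero _ hz.1).symm
  refine ⟨Real.sign z.1, dfun lam α z.1, Tmap lam α z.1,
    dfun lam α z.1 * lam + Real.sign z.1 * z.2, hε,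
    one_le_dfun hf.lam_pos hf.half_le hf.mul_lt_one (hf.injectivityRegion_subset hz).1 hz.1,
    Tmap_mem_rosenInterval hf.lam_pos hz.1, hz.2.1,
    Prod.ext (eq_sign_div_dfun_add_Tmap z.1) ?_⟩
  rcases hε with hε | hε <;> simp only [inverseBranch, hε] <;> ring

theorem inverseBranch_one_mem_iff (ht : t ∈ rosenInterval lam α) (htE : t ∉ E) {d : ℤ}
    (hd : 1 ≤ d) {w : ℝ} : inverseBranch lam 1 d t w ∈ injectivityRegion lam α f E ↔
      0 < w - d * lam ∧ w - d * lam < f (1 / (d * lam + t)) := by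
  have hpos := digit_mul_add_pos hf.alpha_pos hf.lam_pos hd ht
  have hx : 0 < 1 / (d * lam + t) := one_div_pos.2 hpos
  have hT := Tmap_inverseBranch hf.lam_pos hf.alpha_pos (.inl rfl) hd ht
  simp only [injectivityRegion, mem_ofPred_eq, inverseBranch, one_mul, hT]
  exact ⟨fun h ↦ ⟨h.2.2.1, h.2.2.2.2 hx⟩, fun h ↦ ⟨hx.ne', htE, h.1, h.2.le, fun _ ↦ h.2⟩⟩

theorem inverseBranch_neg_one_mem_iff (ht : t ∈ rosenInterval lam α) (htE : t ∉ E) {d : ℤ}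
    (hd : 1 ≤ d) {w : ℝ} : inverseBranch lam (-1) d t w ∈ injectivityRegion lam α f E ↔
      0 < d * lam - w ∧ d * lam - w ≤ f (-1 / (d * lam + t)) := by
  have hpos := digit_mul_add_pos hf.alpha_pos hf.lam_pos hd ht
  have hx : -1 / (d * lam + t) < 0 := div_neg_of_neg_of_pos (by norm_num) hpos
  have hT := Tmap_inverseBranch hf.lam_pos hf.alpha_pos (.inr rfl) hd ht
  simp only [injectivityRegion, mem_ofPred_eq, inverseBranch, neg_one_mul, neg_sub, hT]
  exact ⟨fun h ↦ ⟨h.2.2.1, h.2.2.2.1⟩,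
    fun h ↦ ⟨hx.ne, htE, h.1, h.2, fun h0 ↦ absurd h0 hx.not_gt⟩⟩

theorem le_digit_of_pos (hδ : IsFibreTiling lam α f t δ) {d : ℤ} (hd : 1 ≤ d)
    (h : 0 < f (1 / (d * lam + t))) : δ ≤ d :=
  hδ.le_of_le d hd ((hf.pos_iff _).1 h).2.le

theorem le_digit_of_pos_neg (hδ : IsFibreTiling lam α f t δ) {d : ℤ} (hd : 1 ≤ d)
    (h : 0 < f (-1 / (d * lam + t))) : δ ≤ d := by
  refine hδ.le_of_le d hd ?_
  have hge := ((hf.pos_iff _).1 h).1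
  rw [neg_div] at hge
  nlinarith [hf.half_le, hf.lam_pos]

theorem one_div_le_digit_mul (hδ : IsFibreTiling lam α f t δ) {d : ℤ} (hd : δ ≤ d) :
    1 / f t ≤ d * lam := by
  have hmul : δ * lam ≤ d * lam :=
    mul_le_mul_of_nonneg_right (by exact_mod_cast hd) hf.lam_pos.le
  linarith [hδ.bottom, hf.nonneg (-1 / (δ * lam + t))]

theorem one_div_le_of_inverseBranch_mem (ht : t ∈ rosenInterval lam α) (htE : t ∉ E)
    (hδ : IsFibreTiling lam α f t δ) {ε w : ℝ} {d : ℤ} (hε : ε = 1 ∨ ε = -1) (hd : 1 ≤ d)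
    (h : inverseBranch lam ε d t w ∈ injectivityRegion lam α f E) : 1 / f t ≤ w := by
  rcases hε with rfl | rfl
  · rw [hf.inverseBranch_one_mem_iff ht htE hd] at h
    linarith [hf.one_div_le_digit_mul hδ (hf.le_digit_of_pos hδ hd (h.1.trans h.2))]
  · rw [hf.inverseBranch_neg_one_mem_iff ht htE hd] at h
    rcases (hf.le_digit_of_pos_neg hδ hd (h.1.trans_le h.2)).eq_or_lt with rfl | hlt
    · linarith [hδ.bottom]
    · have hle := hf.one_div_le_digit_mul hδ (Int.le_sub_one_of_lt hlt)
      push_cast at hle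
      linarith [hf.lt_lam (-1 / (d * lam + t))]

theorem not_inverseBranch_mem_of_opposite_sign (ht : t ∈ rosenInterval lam α) (htE : t ∉ E)
    (hδ : IsFibreTiling lam α f t δ) {w : ℝ} {d d' : ℤ} (hd : 1 ≤ d) (hd' : 1 ≤ d')
    (h : inverseBranch lam 1 d t w ∈ injectivityRegion lam α f E) :
    inverseBranch lam (-1) d' t w ∉ injectivityRegion lam α f E := by
  rw [hf.inverseBranch_one_mem_iff ht htE hd] at h
  rw [hf.inverseBranch_neg_one_mem_iff ht htE hd']
  intro h'
  have hsucc : d' = d + 1 := by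
    refine int_eq_of_abs_mul_sub_mul_lt hf.lam_pos (abs_lt.2 ?_)
    push_cast
    constructor <;> linarith [hf.lt_lam (1 / (d * lam + t)), hf.lt_lam (-1 / (d' * lam + t))]
  subst hsucc
  push_cast at h'
  linarith [hδ.adjacent d (hf.le_digit_of_pos hδ hd (h.1.trans h.2))]

theorem inverseBranch_unique (ht : t ∈ rosenInterval lam α) (htE : t ∉ E)
    (hδ : IsFibreTiling lam α f t δ) {ε ε' w : ℝ} {d d' : ℤ} (hε : ε = 1 ∨ ε = -1)
    (hε' : ε' = 1 ∨ ε' = -1) (hd : 1 ≤ d) (hd' : 1 ≤ d')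
    (h : inverseBranch lam ε d t w ∈ injectivityRegion lam α f E)
    (h' : inverseBranch lam ε' d' t w ∈ injectivityRegion lam α f E) : ε = ε' ∧ d = d' := by
  rcases hε with rfl | rfl <;> rcases hε' with rfl | rfl
  · rw [hf.inverseBranch_one_mem_iff ht htE ‹_›] at h h'
    refine ⟨rfl, int_eq_of_abs_mul_sub_mul_lt hf.lam_pos (abs_lt.2 ?_)⟩
    constructor <;> linarith [hf.lt_lam (1 / (d * lam + t)), hf.lt_lam (1 / (d' * lam + t))]
  · exact absurd h' (hf.not_inverseBranch_mem_of_opposite_sign ht htE hδ hd hd' h)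
  · exact absurd h (hf.not_inverseBranch_mem_of_opposite_sign ht htE hδ hd' hd h')
  · rw [hf.inverseBranch_neg_one_mem_iff ht htE ‹_›] at h h'
    refine ⟨rfl, int_eq_of_abs_mul_sub_mul_lt hf.lam_pos (abs_lt.2 ?_)⟩
    constructor <;> linarith [hf.lt_lam (-1 / (d * lam + t)), hf.lt_lam (-1 / (d' * lam + t))]

theorem exists_inverseBranch_mem (ht : t ∈ rosenInterval lam α) (htE : t ∉ E)
    (hδ : IsFibreTiling lam α f t δ) {w : ℝ} (hw : 1 / f t ≤ w)
    (hwlam : ∀ d : ℤ, w ≠ d * lam) :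
    ∃ ε d, (ε = 1 ∨ ε = -1) ∧ 1 ≤ d ∧
      inverseBranch lam ε d t w ∈ injectivityRegion lam α f E := by
  have hlam := hf.lam_pos
  obtain ⟨n, hn⟩ : ∃ n : ℤ, n = ⌊w / lam⌋ := ⟨_, rfl⟩
  obtain ⟨hnw, hwn⟩ := Int.floor_eq_iff.1 hn.symm
  rw [le_div_iff₀ hlam] at hnw
  rw [div_lt_iff₀ hlam] at hwn
  have hnw' : n * lam < w := hnw.lt_of_ne (hwlam n).symm
  have hδn : δ ≤ n + 1 := by
    have hlt : (δ - 1 : ℝ) * lam < (n + 1) * lam := by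
      linarith [hδ.bottom, hf.lt_lam (-1 / (δ * lam + t))]
    have hlt' : δ - 1 < n + 1 := by exact_mod_cast lt_of_mul_lt_mul_right hlt hlam.le
    omega
  have hn1 : 1 ≤ n + 1 := hδ.one_le.trans hδn
  have neg_branch (h : (n + 1) * lam - w ≤ f (-1 / ((n + 1) * lam + t))) :
      inverseBranch lam (-1) (n + 1) t w ∈ injectivityRegion lam α f E :=
    (hf.inverseBranch_neg_one_mem_iff ht htE hn1).2 (by push_cast; exact ⟨by linarith, h⟩)
  rcases hδn.eq_or_lt with rfl | hlt
  · have hbottom := hδ.bottom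
    push_cast at hbottom
    exact ⟨-1, n + 1, .inr rfl, hn1, neg_branch (by linarith)⟩
  · have hδn' : δ ≤ n := Int.lt_add_one_iff.1 hlt
    have hn0 : 1 ≤ n := hδ.one_le.trans hδn'
    rcases lt_or_ge (w - n * lam) (f (1 / (n * lam + t))) with hwf | hwf
    · exact ⟨1, n, .inl rfl, hn0,
        (hf.inverseBranch_one_mem_iff ht htE hn0).2 ⟨by linarith, hwf⟩⟩
    · exact ⟨-1, n + 1, .inr rfl, hn1, neg_branch (by linarith [hδ.adjacent n hδn'])⟩

theorem mapsTo_Tnat :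
    MapsTo (Tnat lam α) (injectivityRegion lam α f E) (heightRegion lam α f) := by
  intro z hz
  obtain ⟨ε, d, t, w, hε, hd, ht, htE, rfl⟩ := hf.exists_eq_inverseBranch hz
  obtain ⟨δ, hδ⟩ := hf.exists_isFibreTiling t ht htE
  have hw := hf.one_div_le_of_inverseBranch_mem ht htE hδ hε hd hz
  have hft : 0 < f t := (hf.pos_iff t).2 ht
  have hw0 : 0 < w := (one_div_pos.2 hft).trans_le hw
  rw [Tnat_inverseBranch hf.lam_pos hf.alpha_pos hε hd ht]
  exact ⟨ht, one_div_nonneg.2 hw0.le, (one_div_le hft hw0).1 hw⟩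

theorem injOn_Tnat : InjOn (Tnat lam α) (injectivityRegion lam α f E) := by
  intro z hz z' hz' heq
  obtain ⟨ε, d, t, w, hε, hd, ht, htE, rfl⟩ := hf.exists_eq_inverseBranch hz
  obtain ⟨ε', d', t', w', hε', hd', ht', -, rfl⟩ := hf.exists_eq_inverseBranch hz'
  obtain ⟨δ, hδ⟩ := hf.exists_isFibreTiling t ht htE
  rw [Tnat_inverseBranch hf.lam_pos hf.alpha_pos hε hd ht,
    Tnat_inverseBranch hf.lam_pos hf.alpha_pos hε' hd' ht', Prod.mk.injEq, one_div, one_div,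
    inv_inj] at heq
  obtain ⟨rfl, rfl⟩ := heq
  obtain ⟨rfl, rfl⟩ := hf.inverseBranch_unique ht htE hδ hε hε' hd hd' hz hz'
  rfl

theorem mem_image_Tnat {t y : ℝ} (hz : (t, y) ∈ heightRegion lam α f) (htE : t ∉ E)
    (hy : ∀ d : ℤ, y ≠ 1 / (d * lam)) :
    (t, y) ∈ Tnat lam α '' injectivityRegion lam α f E := by
  obtain ⟨ht, hy0, hyf⟩ := hz
  obtain ⟨δ, hδ⟩ := hf.exists_isFibreTiling t ht htE
  have hy_pos : 0 < y := hy0.lt_of_ne (by simpa using (hy 0).symm)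
  obtain ⟨ε, d, hε, hd, hmem⟩ := hf.exists_inverseBranch_mem ht htE hδ
    (one_div_le_one_div_of_le hy_pos hyf) fun d h ↦ hy d (by rw [← h, one_div_one_div])
  exact ⟨_, hmem, by rw [Tnat_inverseBranch hf.lam_pos hf.alpha_pos hε hd ht, one_div_one_div]⟩

theorem volume_heightRegion_diff_image_Tnat (hE : E.Countable) :
    volume (heightRegion lam α f \ Tnat lam α '' injectivityRegion lam α f E) = 0 := by
  refine measure_mono_null ?_ (volume_preimage_fst_union_preimage_snd_eq_zero hE
    (countable_range fun d : ℤ ↦ 1 / (d * lam)))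
  rintro ⟨t, y⟩ ⟨hz, him⟩
  contrapose! him
  simp only [mem_union, mem_preimage, mem_range, not_or, not_exists] at him
  exact hf.mem_image_Tnat hz him.1 fun d h ↦ him.2 d h.symm

theorem exists_null_bijOn_Tnat (hE : E.Countable) (hfr : (range f).Countable) :
    ∃ N N' : Set (ℝ × ℝ), N ⊆ heightRegion lam α f ∧ N' ⊆ heightRegion lam α f ∧
      volume N = 0 ∧ volume N' = 0 ∧
      BijOn (Tnat lam α) (heightRegion lam α f \ N) (heightRegion lam α f \ N') := by
  refine ⟨_, _, sdiff_subset, sdiff_subset,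
    volume_heightRegion_diff_injectivityRegion hE hfr,
    hf.volume_heightRegion_diff_image_Tnat hE, ?_⟩
  rw [sdiff_sdiff_cancel_left hf.injectivityRegion_subset,
    sdiff_sdiff_cancel_left hf.mapsTo_Tnat.image_subset]
  exact hf.injOn_Tnat.bijOn_image

end IsHeightFunction

end Criterion

section SinRatio

/-- The ratio `B_n = sin(nθ)/sin θ`, the Chebyshev value `U_{n-1}(cos θ)` when `sin θ ≠ 0`. -/
noncomputable def sinRatio (θ : ℝ) (n : ℤ) : ℝ := Real.sin (n * θ) / Real.sin θ

variable {θ : ℝ} {n : ℤ}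

theorem sinRatio_zero : sinRatio θ 0 = 0 := by simp [sinRatio]

theorem sinRatio_one (hθ : Real.sin θ ≠ 0) : sinRatio θ 1 = 1 := by simp [sinRatio, hθ]

theorem sinRatio_add_two (θ : ℝ) (n : ℤ) :
    sinRatio θ (n + 2) = 2 * Real.cos θ * sinRatio θ (n + 1) - sinRatio θ n := by
  have hsin : Real.sin ((n + 2) * θ) =
      2 * Real.cos θ * Real.sin ((n + 1) * θ) - Real.sin (n * θ) := by
    rw [show (n + 2) * θ = (n + 1) * θ + θ by ring, show n * θ = (n + 1) * θ - θ by ring,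
      Real.sin_add, Real.sin_sub]
    ring
  simp only [sinRatio]
  push_cast
  rw [hsin, sub_div, mul_div_assoc]

theorem sinRatio_pos (hθ : 0 < θ) (hn : 1 ≤ n) (hnθ : n * θ < Real.pi) : 0 < sinRatio θ n := by
  have hn' : (1 : ℝ) ≤ n := by exact_mod_cast hn
  exact div_pos (Real.sin_pos_of_pos_of_lt_pi (by positivity) hnθ)
    (Real.sin_pos_of_pos_of_lt_pi hθ ((le_mul_of_one_le_left hθ.le hn').trans_lt hnθ))

theorem sinRatio_le_succ (hθ : 0 < θ) (hn : 0 ≤ n) (hnθ : (2 * n + 1) * θ ≤ Real.pi) :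
    sinRatio θ n ≤ sinRatio θ (n + 1) := by
  have hn' : (0 : ℝ) ≤ n := by exact_mod_cast hn
  have hθπ : θ ≤ Real.pi := (le_mul_of_one_le_left hθ.le (by linarith)).trans hnθ
  refine div_le_div_of_nonneg_right ?_ (Real.sin_nonneg_of_nonneg_of_le_pi hθ.le hθπ)
  push_cast
  rw [← sub_nonneg, Real.sin_sub_sin, show ((n + 1) * θ - n * θ) / 2 = θ / 2 by ring,
    show ((n + 1) * θ + n * θ) / 2 = (2 * n + 1) * θ / 2 by ring]
  have hsin := Real.sin_nonneg_of_nonneg_of_le_pi (x := θ / 2) (by linarith) (by linarith)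
  have hcos := Real.cos_nonneg_of_neg_pi_div_two_le_of_le (x := (2 * n + 1) * θ / 2)
    (by linarith [mul_nonneg (by linarith : (0 : ℝ) ≤ 2 * n + 1) hθ.le, Real.pi_pos])
    (by linarith)
  positivity

theorem sinRatio_eq_of_add_mul_eq_pi {m : ℤ} (h : (m + n) * θ = Real.pi) :
    sinRatio θ m = sinRatio θ n := by
  rw [sinRatio, sinRatio, show m * θ = Real.pi - n * θ by linarith, Real.sin_pi_sub]

end SinRatio

/-- The properties of `B_n = sin(nπ/(2h+3))/sin(π/(2h+3))` on which the combinatorics of the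
natural extension rests, with `λ = B_2`. -/
structure IsRosenSequence (h : ℕ) (lam : ℝ) (B : ℤ → ℝ) : Prop where
  zero : B 0 = 0
  one : B 1 = 1
  add_two : ∀ n : ℤ, B (n + 2) = lam * B (n + 1) - B n
  symm : B (h + 2) = B (h + 1)
  pos : ∀ n : ℤ, 1 ≤ n → n ≤ h + 2 → 0 < B n
  le_succ : ∀ n : ℤ, 0 ≤ n → n ≤ h + 1 → B n ≤ B (n + 1)

theorem isRosenSequence_sinRatio (h : ℕ) :
    IsRosenSequence h (2 * Real.cos (Real.pi / (2 * h + 3)))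
      (sinRatio (Real.pi / (2 * h + 3))) := by
  obtain ⟨θ, hθ⟩ : ∃ θ, θ = Real.pi / (2 * h + 3) := ⟨_, rfl⟩
  have hπ : (2 * h + 3) * θ = Real.pi := by rw [hθ]; field_simp
  have hθ0 : 0 < θ := by rw [hθ]; positivity
  have mul_lt (n : ℤ) (hn : n ≤ h + 2) : n * θ < Real.pi := by
    have hn' : (n : ℝ) ≤ h + 2 := by exact_mod_cast hn
    nlinarith
  rw [← hθ]
  refine ⟨sinRatio_zero, sinRatio_one ?_, sinRatio_add_two θ, sinRatio_eq_of_add_mul_eq_pi ?_,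
    fun n hn hnh ↦ sinRatio_pos hθ0 hn (mul_lt n hnh), fun n hn hnh ↦ sinRatio_le_succ hθ0 hn ?_⟩
  · exact (Real.sin_pos_of_pos_of_lt_pi hθ0 (by simpa using mul_lt 1 (by omega))).ne'
  · push_cast
    linarith
  · have hn' : (n : ℝ) ≤ h + 1 := by exact_mod_cast hnh
    nlinarith

namespace IsRosenSequence

variable {h : ℕ} {lam : ℝ} {B : ℤ → ℝ} (hB : IsRosenSequence h lam B)

include hB

theorem two : B 2 = lam := by
  simpa [hB.zero, hB.one] using hB.add_two 0

theorem neg_one : B (-1) = -1 := by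
  have := hB.add_two (-1)
  norm_num [hB.zero, hB.one] at this
  linarith

theorem sq_sub_mul (n : ℕ) : B (n + 1) ^ 2 - B n * B (n + 2) = 1 := by
  induction n with
  | zero => simp [hB.zero, hB.one]
  | succ n ih =>
    have h₂ := hB.add_two n
    have h₃ := hB.add_two (n + 1)
    rw [add_assoc (n : ℤ) 1 2, add_assoc (n : ℤ) 1 1] at h₃
    push_cast
    rw [add_assoc (n : ℤ) 1 2, add_assoc (n : ℤ) 1 1, one_add_one_eq_two]
    rw [one_add_one_eq_two] at h₃
    rw [h₃]
    linear_combination ih + (B (n + 2)) * h₂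

theorem nonneg {n : ℤ} (hn : 0 ≤ n) (hnh : n ≤ h + 2) : 0 ≤ B n := by
  rcases hn.eq_or_lt with rfl | hn
  · exact hB.zero.ge
  · exact (hB.pos n hn hnh).le

theorem le_mul_succ {n : ℤ} (hn : -1 ≤ n) (hnh : n ≤ h) : B n ≤ (lam - 1) * B (n + 1) := by
  have := hB.le_succ (n + 1) (by omega) (by omega)
  rw [add_assoc, one_add_one_eq_two] at this
  linarith [hB.add_two n]

theorem eq_mul_succ : B h = (lam - 1) * B (h + 1) := by
  linarith [hB.add_two h, hB.symm]

theorem lt_mul_succ {n : ℤ} (hn : 0 ≤ n) (hnh : n ≤ h) {x : ℝ} (hx : lam - 1 < x) :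
    B n < x * B (n + 1) :=
  (hB.le_mul_succ (by omega) hnh).trans_lt
    (mul_lt_mul_of_pos_right hx (hB.pos _ (by omega) (by omega)))

theorem one_lt (hh : 1 ≤ h) : 1 < lam := by
  have hpos := hB.pos h (by omega) (by omega)
  rw [hB.eq_mul_succ] at hpos
  linarith [pos_of_mul_pos_left hpos (hB.pos (h + 1) (by omega) (by omega)).le]

theorem lt_two : lam < 2 := by
  have hdet := hB.sq_sub_mul h
  rw [hB.symm, hB.eq_mul_succ] at hdet
  nlinarith [sq_nonneg (B (h + 1))]

end IsRosenSequence

section OrbitPoint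

/-- The `n`-th iterate of `y ↦ -1/y - λ` starting from `1/x - λ`, in closed form. -/
noncomputable def orbitPoint (B : ℤ → ℝ) (n : ℤ) (x : ℝ) : ℝ :=
  (B (n + 2) * x - B (n + 1)) / (B n - B (n + 1) * x)

/-- The value `(1-x)/(1+x-λ)` of `orbitPoint B h x`, where the symmetry of `B` has been used to
eliminate `B`. -/
noncomputable def lastOrbitPoint (lam x : ℝ) : ℝ := (1 - x) / (1 + x - lam)

namespace IsRosenSequence

variable {h : ℕ} {lam : ℝ} {B : ℤ → ℝ} (hB : IsRosenSequence h lam B)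

include hB

theorem orbitPoint_zero {x : ℝ} (hx : x ≠ 0) : orbitPoint B 0 x = 1 / x - lam := by
  have h₂ := hB.add_two 0
  rw [zero_add, zero_add, hB.zero, hB.one] at h₂
  rw [orbitPoint, zero_add, zero_add, h₂, hB.zero, hB.one]
  field_simp
  ring

theorem orbitPoint_succ {n : ℕ} (hn : n < h) {x : ℝ} (hx : lam - 1 < x) :
    orbitPoint B (n + 1) x = -1 / orbitPoint B n x - lam := by
  have hlt := hB.lt_mul_succ (n := n + 1) (by omega) (by omega) hx
  have h₂ := hB.add_two n
  have h₃ := hB.add_two (n + 1)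
  rw [add_assoc (n : ℤ), add_assoc (n : ℤ), one_add_one_eq_two] at h₃
  rw [add_assoc (n : ℤ), one_add_one_eq_two] at hlt
  have hden : B (n + 1) - B (n + 2) * x ≠ 0 := by linarith
  rw [orbitPoint, orbitPoint, add_assoc (n : ℤ), add_assoc (n : ℤ), one_add_one_eq_two, h₃,
    div_div_eq_mul_div, ← neg_sub (B (n + 1)) (_ * x), neg_one_mul, neg_div_neg_eq, div_sub' hden]
  congr 1
  linear_combination -h₂

theorem orbitPoint_sub_one_div (n : ℤ) {x : ℝ} (hx : x ≠ 0) :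
    orbitPoint B n (lam - 1 / x) = orbitPoint B (n + 1) x := by
  have h₂ := hB.add_two n
  have h₃ := hB.add_two (n + 1)
  rw [add_assoc n, add_assoc n, one_add_one_eq_two] at h₃
  rw [orbitPoint, orbitPoint, add_assoc n, add_assoc n, one_add_one_eq_two, h₃,
    ← mul_div_mul_right _ (B n - _) hx]
  congr 1
  · field_simp
    ring
  · field_simp
    linear_combination x * h₂

theorem orbitPoint_antitone {n : ℕ} (hn : n ≤ h) {x y : ℝ} (hx : lam - 1 < x) (hxy : x ≤ y) :
    orbitPoint B n y ≤ orbitPoint B n x := by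
  have hltx := hB.lt_mul_succ (n := n) (by omega) (by omega) hx
  have hlty := hB.lt_mul_succ (n := n) (by omega) (by omega) (hx.trans_le hxy)
  rw [orbitPoint, orbitPoint, ← neg_div_neg_eq, ← neg_div_neg_eq (_ * x - _),
    div_le_div_iff₀ (by linarith) (by linarith)]
  have hdet := hB.sq_sub_mul n
  linear_combination (x - y) * hdet + hxy

theorem orbitPoint_last (x : ℝ) : orbitPoint B h x = lastOrbitPoint lam x := by
  have hpos := hB.pos (h + 1) (by omega) (by omega)
  rw [orbitPoint, lastOrbitPoint, hB.symm, hB.eq_mul_succ,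
    show B (h + 1) * x - B (h + 1) = -B (h + 1) * (1 - x) by ring,
    show (lam - 1) * B (h + 1) - B (h + 1) * x = -B (h + 1) * (1 + x - lam) by ring,
    mul_div_mul_left _ _ (neg_ne_zero.2 hpos.ne')]

end IsRosenSequence

variable {lam x : ℝ}

theorem lastOrbitPoint_one_div (hx : 0 < x) (hxlam : lam - 1 < x) :
    lastOrbitPoint lam (1 / x) = -lastOrbitPoint lam x / (1 + lam * lastOrbitPoint lam x) := by
  have hden : 1 + x - lam ≠ 0 := by linarith
  rw [lastOrbitPoint, lastOrbitPoint, ← mul_div_mul_right _ (1 + 1 / x - lam) hx.ne',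
    ← mul_div_mul_right (-_) (1 + _) hden]
  congr 1 <;> field_simp <;> ring

theorem lastOrbitPoint_nonneg (hxlam : lam - 1 < x) (hx : x ≤ 1) : 0 ≤ lastOrbitPoint lam x :=
  div_nonneg (by linarith) (by linarith)

end OrbitPoint

section CutSystem

/-- The breakpoints `p 0 ≤ … ≤ p (4h+3)` of the natural extension, listed in the paper's order
`ℓ_0, r_{h+1}, ℓ_{h+1}, r_1, ℓ_1, …, ℓ_h, r_{2h+1}, ℓ_{2h+1}`, where `R = r_0 = λα` lies between the
last two. Four consecutive breakpoints are carried to the next four by `y ↦ -1/y - λ`. -/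
structure IsCutSystem (h : ℕ) (lam R : ℝ) (p : ℕ → ℝ) : Prop where
  le_succ : ∀ k < 4 * h + 3, p k ≤ p (k + 1)
  zero : p 0 = R - lam
  three : p 3 = 1 / R - lam
  add_four : ∀ k < 4 * h, p (k + 4) = -1 / p k - lam
  last : p (4 * h + 3) = p 1 + lam
  lt_last : R < p (4 * h + 3)
  nonneg : 0 ≤ p (4 * h + 2)
  lt : p (4 * h + 2) < R
  neg : p (4 * h) < 0
  inv_neg : -1 / p (4 * h) = p 2 + 2 * lam
  reflect : p (4 * h + 1) = -p (4 * h + 2) / (1 + lam * p (4 * h + 2))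

/-- The parameters `x` of the first four breakpoints `1/x - λ`, where `u = p (4h+3)`. -/
noncomputable def cutParam (lam R : ℝ) : ℕ → ℝ
  | 0 => 1 / R
  | 1 => 1 / lastOrbitPoint lam R
  | 2 => lastOrbitPoint lam R
  | _ => R

/-- The breakpoints of the natural extension as iterates of `y ↦ -1/y - λ`. -/
noncomputable def cut (B : ℤ → ℝ) (lam R : ℝ) (k : ℕ) : ℝ :=
  orbitPoint B (k / 4 : ℕ) (cutParam lam R (k % 4))

theorem cut_four_mul_add (B : ℤ → ℝ) (lam R : ℝ) (n : ℕ) {i : ℕ} (hi : i < 4) :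
    cut B lam R (4 * n + i) = orbitPoint B n (cutParam lam R i) := by
  rw [cut, show (4 * n + i) / 4 = n by omega, show (4 * n + i) % 4 = i by omega]

variable {h : ℕ} {lam R : ℝ} {B : ℤ → ℝ}

/-- The range `1/2 ≤ α < ρ/λ` of the parameter, expressed through the right endpoint `R = λα` and
the quadratic equation `ρ² + (2-λ)ρ = 1`. -/
structure IsAdmissibleEndpoint (lam R : ℝ) : Prop where
  one_lt : 1 < lam
  lt_two : lam < 2
  half_le : lam / 2 ≤ R
  quadratic_lt : R ^ 2 + (2 - lam) * R < 1

namespace IsAdmissibleEndpoint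

variable (hR : IsAdmissibleEndpoint lam R)

include hR

theorem pos : 0 < R := by linarith [hR.one_lt, hR.half_le]

theorem sub_one_lt : lam - 1 < R := by linarith [hR.lt_two, hR.half_le]

theorem lt_lastOrbitPoint : R < lastOrbitPoint lam R := by
  rw [lastOrbitPoint, lt_div_iff₀ (by linarith [hR.sub_one_lt])]
  linarith [hR.quadratic_lt]

theorem lastOrbitPoint_le_one : lastOrbitPoint lam R ≤ 1 := by
  rw [lastOrbitPoint, div_le_one (by linarith [hR.sub_one_lt])]
  linarith [hR.half_le]

theorem lt_one : R < 1 := hR.lt_lastOrbitPoint.trans_le hR.lastOrbitPoint_le_one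

theorem lastOrbitPoint_lastOrbitPoint_lt : lastOrbitPoint lam (lastOrbitPoint lam R) < R := by
  have hlt := hR.lt_lastOrbitPoint
  have hden : 0 < 1 + R - lam := by linarith [hR.sub_one_lt]
  have hu : lastOrbitPoint lam R * (1 + R - lam) = 1 - R := div_mul_cancel₀ _ hden.ne'
  have hpos : 0 < lam * (1 - (R ^ 2 + (2 - lam) * R)) :=
    mul_pos (by linarith [hR.one_lt]) (by linarith [hR.quadratic_lt])
  rw [lastOrbitPoint, div_lt_iff₀ (by linarith), ← mul_lt_mul_iff_left₀ hden]
  linear_combination hpos - (1 + R) * hu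

theorem cutParam_succ_le (i : ℕ) : cutParam lam R (i + 1) ≤ cutParam lam R i := by
  have hlt := hR.lt_lastOrbitPoint
  have hle := hR.lastOrbitPoint_le_one
  match i with
  | 0 => exact one_div_le_one_div_of_le hR.pos hlt.le
  | 1 => exact hle.trans (one_le_one_div (hR.pos.trans hlt) hle)
  | 2 => exact hlt.le
  | _ + 3 => exact le_rfl

theorem sub_one_lt_cutParam (i : ℕ) : lam - 1 < cutParam lam R i :=
  hR.sub_one_lt.trans_le (antitone_nat_of_succ_le hR.cutParam_succ_le (Nat.le_add_right i 3))

theorem cutParam_pos (i : ℕ) : 0 < cutParam lam R i := by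
  linarith [hR.one_lt, hR.sub_one_lt_cutParam i]

variable (hB : IsRosenSequence h lam B)

include hB

theorem cut_eq_one_div_sub {i : ℕ} (hi : i < 4) : cut B lam R i = 1 / cutParam lam R i - lam := by
  have := cut_four_mul_add B lam R 0 hi
  rwa [mul_zero, zero_add, Nat.cast_zero, hB.orbitPoint_zero (hR.cutParam_pos i).ne'] at this

theorem cut_le_succ {k : ℕ} (hk : k < 4 * h + 3) : cut B lam R k ≤ cut B lam R (k + 1) := by
  obtain ⟨n, i, hi, rfl⟩ : ∃ n i, i < 4 ∧ k = 4 * n + i :=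
    ⟨k / 4, k % 4, Nat.mod_lt _ (by norm_num), (Nat.div_add_mod k 4).symm⟩
  rw [cut_four_mul_add B lam R n hi]
  rcases (Nat.le_of_lt_succ hi).lt_or_eq with hi3 | rfl
  · rw [add_assoc, cut_four_mul_add B lam R n (by omega : i + 1 < 4)]
    exact hB.orbitPoint_antitone (by omega) (hR.sub_one_lt_cutParam _) (hR.cutParam_succ_le i)
  · rw [show 4 * n + 3 + 1 = 4 * (n + 1) + 0 by ring, cut_four_mul_add B lam R _ (by norm_num)]
    change orbitPoint B n R ≤ orbitPoint B (n + 1 : ℕ) (1 / R)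
    rw [Nat.cast_succ, ← hB.orbitPoint_sub_one_div n (one_div_pos.2 hR.pos).ne', one_div_one_div]
    exact hB.orbitPoint_antitone (by omega) (by linarith [hR.lt_one]) (by linarith [hR.half_le])

theorem cut_add_four {k : ℕ} (hk : k < 4 * h) :
    cut B lam R (k + 4) = -1 / cut B lam R k - lam := by
  rw [cut, cut, show (k + 4) / 4 = k / 4 + 1 by omega, Nat.add_mod_right, Nat.cast_succ]
  exact hB.orbitPoint_succ (by omega) (hR.sub_one_lt_cutParam _)

theorem isCutSystem : IsCutSystem h lam R (cut B lam R) := by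
  have hlam := hR.one_lt
  have hRu := hR.lt_lastOrbitPoint
  have hu0 := hR.pos.trans hRu
  have cut_last {i : ℕ} (hi : i < 4) :
      cut B lam R (4 * h + i) = lastOrbitPoint lam (cutParam lam R i) := by
    rw [cut_four_mul_add B lam R h hi, hB.orbitPoint_last]
  have h0 : cut B lam R (4 * h) = _ := cut_last (i := 0) (by norm_num)
  rw [cutParam, lastOrbitPoint_one_div hR.pos hR.sub_one_lt] at h0
  have h1 := cut_last (i := 1) (by norm_num)
  rw [cutParam, lastOrbitPoint_one_div hu0 (hR.sub_one_lt.trans hRu)] at h1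
  have h2 : cut B lam R (4 * h + 2) = lastOrbitPoint lam (lastOrbitPoint lam R) :=
    cut_last (by norm_num)
  have h3 : cut B lam R (4 * h + 3) = lastOrbitPoint lam R := cut_last (by norm_num)
  exact
    { le_succ := fun k ↦ hR.cut_le_succ hB
      zero := by rw [hR.cut_eq_one_div_sub hB (by norm_num), cutParam, one_div_one_div]
      three := hR.cut_eq_one_div_sub hB (by norm_num)
      add_four := fun k ↦ hR.cut_add_four hB
      last := by
        rw [h3, hR.cut_eq_one_div_sub hB (by norm_num), cutParam, one_div_one_div, sub_add_cancel]
      lt_last := h3 ▸ hRu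
      nonneg := h2 ▸ lastOrbitPoint_nonneg (hR.sub_one_lt.trans hRu) hR.lastOrbitPoint_le_one
      lt := h2 ▸ hR.lastOrbitPoint_lastOrbitPoint_lt
      neg := h0 ▸ div_neg_of_neg_of_pos (by linarith) (by positivity)
      inv_neg := by
        rw [h0, hR.cut_eq_one_div_sub hB (by norm_num), cutParam]
        field_simp
        ring
      reflect := by rw [h1, h2] }

end IsAdmissibleEndpoint

end CutSystem

section HeightSystem

/-- The relations between the heights `H_1, …, H_{4h+3}` of the natural extension which express
that the images of the fibres fit together. -/
structure IsHeightSystem (h : ℕ) (lam : ℝ) (H : ℕ → ℝ) : Prop where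
  pos : ∀ k, 1 ≤ k → k ≤ 4 * h + 3 → 0 < H k
  lt_lam : ∀ k, 1 ≤ k → k ≤ 4 * h + 3 → H k < lam
  add_four : ∀ k, 1 ≤ k → k < 4 * h → 1 / H (k + 4) = lam - H k
  four : 1 / H 4 = lam
  one : 1 / H 1 = 2 * lam - H (4 * h - 1)
  two : 1 / H 2 = 2 * lam - H (4 * h)
  three : 1 / H 3 = 2 * lam - H (4 * h + 1)
  top : H (4 * h + 1) + H (4 * h + 3) = lam
  mid : 2 * H (4 * h + 2) = lam

theorem IsHeightSystem.lam_pos {h : ℕ} {lam : ℝ} {H : ℕ → ℝ} (hH : IsHeightSystem h lam H) :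
    0 < lam :=
  (hH.pos 1 le_rfl (by omega)).trans (hH.lt_lam 1 le_rfl (by omega))

theorem IsHeightSystem.congr {h : ℕ} {lam : ℝ} {H H' : ℕ → ℝ} (hH : IsHeightSystem h lam H)
    (hh : 1 ≤ h) (heq : ∀ k, 1 ≤ k → k ≤ 4 * h + 3 → H' k = H k) : IsHeightSystem h lam H' where
  pos k hk hkh := heq k hk hkh ▸ hH.pos k hk hkh
  lt_lam k hk hkh := heq k hk hkh ▸ hH.lt_lam k hk hkh
  add_four k hk hkh := by
    rw [heq k hk (by omega), heq (k + 4) (by omega) (by omega), hH.add_four k hk hkh]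
  four := by rw [heq 4 (by omega) (by omega), hH.four]
  one := by rw [heq 1 (by omega) (by omega), heq (4 * h - 1) (by omega) (by omega), hH.one]
  two := by rw [heq 2 (by omega) (by omega), heq (4 * h) (by omega) (by omega), hH.two]
  three := by rw [heq 3 (by omega) (by omega), heq (4 * h + 1) (by omega) (by omega), hH.three]
  top := by rw [heq (4 * h + 1) (by omega) (by omega), heq (4 * h + 3) (by omega) le_rfl, hH.top]
  mid := by rw [heq (4 * h + 2) (by omega) (by omega), hH.mid]

/-- Four solutions of `s (n+2) = λ s (n+1) - s n`; consecutive ratios of the `i`-th one are the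
heights `H_{4n+i}`. -/
noncomputable def heightSeq (B : ℤ → ℝ) (ρ : ℝ) (h : ℕ) : ℕ → ℤ → ℝ
  | 0, n => B n
  | 1, n => B (h - n + 2) - B (h - n + 1) * ρ
  | 2, n => B n + B (n + 1)
  | _ + 3, n => B (h - n + 1) * ρ - B (h - n)

/-- The heights `H_k` of the natural extension. -/
noncomputable def height (B : ℤ → ℝ) (ρ : ℝ) (h k : ℕ) : ℝ :=
  heightSeq B ρ h (k % 4) (k / 4 : ℕ) / heightSeq B ρ h (k % 4) ((k / 4 : ℕ) + 1)

variable {h : ℕ} {lam ρ : ℝ} {B : ℤ → ℝ}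

theorem height_four_mul_add (B : ℤ → ℝ) (ρ : ℝ) (h n : ℕ) {i : ℕ} (hi : i < 4) :
    height B ρ h (4 * n + i) = heightSeq B ρ h i n / heightSeq B ρ h i (n + 1) := by
  rw [height, show (4 * n + i) / 4 = n by omega, show (4 * n + i) % 4 = i by omega]

theorem lt_one_of_quadratic (hlam : lam < 2) (hρ : ρ ^ 2 + (2 - lam) * ρ = 1) : ρ < 1 := by
  by_contra! h1
  nlinarith

theorem sub_one_lt_of_quadratic (hlam : lam < 2) (hρ0 : 0 < ρ)
    (hρ : ρ ^ 2 + (2 - lam) * ρ = 1) : lam - 1 < ρ := by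
  nlinarith

namespace IsRosenSequence

variable (hB : IsRosenSequence h lam B)

include hB

theorem heightSeq_add_two (ρ : ℝ) (i : ℕ) (n : ℤ) :
    heightSeq B ρ h i (n + 2) = lam * heightSeq B ρ h i (n + 1) - heightSeq B ρ h i n := by
  have shift (m : ℤ) : B (m + 1) = lam * B m - B (m - 1) := by
    have := hB.add_two (m - 1)
    rwa [sub_add_cancel, show m - 1 + 2 = m + 1 by ring] at this
  match i with
  | 0 => exact hB.add_two n
  | 1 =>
    have h₁ := shift (h - n)
    have h₂ := shift (h - n + 1)
    rw [heightSeq, heightSeq, heightSeq]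
    ring_nf at h₁ h₂ ⊢
    linear_combination h₂ - ρ * h₁
  | 2 =>
    have h₁ := hB.add_two n
    have h₂ := hB.add_two (n + 1)
    rw [heightSeq, heightSeq, heightSeq]
    ring_nf at h₁ h₂ ⊢
    linear_combination h₁ + h₂
  | _ + 3 =>
    have h₁ := shift (h - n)
    have h₂ := shift (h - n - 1)
    simp only [heightSeq]
    ring_nf at h₁ h₂ ⊢
    linear_combination ρ * h₁ - h₂

theorem heightSeq_pos (hρ0 : 0 < ρ) (hρ1 : ρ < 1) (hlamρ : lam - 1 < ρ) {i n : ℕ}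
    (hin : 1 ≤ 4 * n + i) (hn : n ≤ h + 1) : 0 < heightSeq B ρ h i n := by
  match i with
  | 0 => exact hB.pos n (by omega) (by omega)
  | 1 =>
    have hle := hB.le_succ (h - n + 1) (by omega) (by omega)
    have hpos := hB.pos (h - n + 1 + 1) (by omega) (by omega)
    rw [add_assoc, one_add_one_eq_two] at hle hpos
    rw [heightSeq]
    nlinarith
  | 2 =>
    have hpos := hB.pos (n + 1) (by omega) (by omega)
    have h0 := hB.nonneg (n := n) (by omega) (by omega)
    exact add_pos_of_nonneg_of_pos h0 hpos
  | _ + 3 =>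
    rw [heightSeq]
    rcases hn.eq_or_lt with rfl | hlt
    · simp [hB.zero, hB.neg_one]
    · linarith [hB.lt_mul_succ (n := h - n) (by omega) (by omega) hlamρ]

theorem height_pos (hρ0 : 0 < ρ) (hρ1 : ρ < 1) (hlamρ : lam - 1 < ρ) {k : ℕ} (hk : 1 ≤ k)
    (hkh : k ≤ 4 * h + 3) : 0 < height B ρ h k := by
  have hpos := hB.heightSeq_pos hρ0 hρ1 hlamρ (i := k % 4) (n := k / 4 + 1) (by omega) (by omega)
  rw [Nat.cast_succ] at hpos
  exact div_pos (hB.heightSeq_pos hρ0 hρ1 hlamρ (by omega) (by omega)) hpos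

theorem one_div_height_add_four (hρ0 : 0 < ρ) (hρ1 : ρ < 1) (hlamρ : lam - 1 < ρ) {k : ℕ}
    (hkh : k < 4 * h) : 1 / height B ρ h (k + 4) = lam - height B ρ h k := by
  have hpos := hB.heightSeq_pos hρ0 hρ1 hlamρ (i := k % 4) (n := k / 4 + 1) (by omega) (by omega)
  rw [Nat.cast_succ] at hpos
  rw [height, height, one_div_div, show (k + 4) / 4 = k / 4 + 1 by omega, Nat.add_mod_right,
    Nat.cast_succ, add_assoc, one_add_one_eq_two, hB.heightSeq_add_two, sub_div,
    mul_div_cancel_right₀ _ hpos.ne']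

theorem height_zero_last : height B ρ h (4 * h) = lam - 1 := by
  have hpos := hB.pos (h + 1) (by omega) (by omega)
  have := height_four_mul_add B ρ h h (i := 0) (by norm_num)
  rwa [heightSeq, heightSeq, hB.eq_mul_succ, mul_div_cancel_right₀ _ hpos.ne'] at this

theorem height_one_last : height B ρ h (4 * h + 1) = lam - ρ := by
  rw [height_four_mul_add B ρ h h (by norm_num), heightSeq, heightSeq]
  simp [hB.zero, hB.one, hB.two]

theorem height_two_last : height B ρ h (4 * h + 2) = lam / 2 := by
  have hpos := hB.pos (h + 1) (by omega) (by omega)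
  rw [height_four_mul_add B ρ h h (by norm_num), heightSeq, heightSeq, add_assoc (h : ℤ),
    one_add_one_eq_two, hB.symm, hB.eq_mul_succ]
  field_simp
  ring

theorem height_three_last : height B ρ h (4 * h + 3) = ρ := by
  rw [height_four_mul_add B ρ h h (by norm_num), heightSeq, heightSeq]
  simp [hB.zero, hB.one, hB.neg_one]

theorem one_div_height_one : 1 / height B ρ h 1 = (1 - (lam - 1) * ρ) / (1 - ρ) := by
  have hpos := hB.pos (h + 1) (by omega) (by omega)
  rw [← mul_div_mul_left (1 - _) _ hpos.ne', show height B ρ h 1 = _ from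
    height_four_mul_add B ρ h 0 (i := 1) (by norm_num), one_div_div, heightSeq, heightSeq]
  simp only [Nat.cast_zero, sub_zero, zero_add, show (h : ℤ) - 1 + 2 = h + 1 by ring,
    sub_add_cancel, hB.symm, hB.eq_mul_succ]
  ring_nf

theorem one_div_height_two : 1 / height B ρ h 2 = 1 + lam := by
  rw [show height B ρ h 2 = _ from height_four_mul_add B ρ h 0 (i := 2) (by norm_num)]
  simp [heightSeq, hB.zero, hB.one, hB.two]

theorem one_div_height_three :
    1 / height B ρ h 3 = ((lam - 1) * ρ - (lam * (lam - 1) - 1)) / (ρ - (lam - 1)) := by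
  have hpos := hB.pos (h + 1) (by omega) (by omega)
  have hpred := hB.add_two (h - 1)
  rw [sub_add_cancel, show (h : ℤ) - 1 + 2 = h + 1 by ring, hB.eq_mul_succ] at hpred
  rw [← mul_div_mul_left (_ - _) _ hpos.ne', show height B ρ h 3 = _ from
    height_four_mul_add B ρ h 0 (i := 3) (by norm_num), one_div_div, heightSeq, heightSeq]
  simp only [Nat.cast_zero, sub_zero, zero_add, sub_add_cancel, hB.eq_mul_succ]
  congr 1
  · linear_combination -hpred
  · ring

theorem one_div_height_four : 1 / height B ρ h 4 = lam := by
  rw [show height B ρ h 4 = _ from height_four_mul_add B ρ h 1 (i := 0) (by norm_num)]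
  simp [heightSeq, hB.one, hB.two]

theorem isHeightSystem (hh : 1 ≤ h) (hρ0 : 0 < ρ) (hρ : ρ ^ 2 + (2 - lam) * ρ = 1) :
    IsHeightSystem h lam (height B ρ h) := by
  have hlam := hB.lt_two
  have hρ1 := lt_one_of_quadratic hlam hρ
  have hlamρ := sub_one_lt_of_quadratic hlam hρ0 hρ
  have pos (k : ℕ) := hB.height_pos hρ0 hρ1 hlamρ (k := k)
  have add_four (k : ℕ) := hB.one_div_height_add_four hρ0 hρ1 hlamρ (k := k)
  have h0 := hB.height_zero_last (ρ := ρ)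
  have h1 := hB.height_one_last (ρ := ρ)
  have h2 := hB.height_two_last (ρ := ρ)
  have h3 := hB.height_three_last (ρ := ρ)
  refine ⟨pos, fun k hk hkh ↦ ?_, fun k _ ↦ add_four k, hB.one_div_height_four, ?_, ?_, ?_, ?_, ?_⟩
  · rcases lt_or_ge k (4 * h) with hlt | hge
    · linarith [add_four k hlt, one_div_pos.2 (pos (k + 4) (by omega) (by omega))]
    · have hlam1 := hB.one_lt hh
      obtain rfl | rfl | rfl | rfl :
          k = 4 * h ∨ k = 4 * h + 1 ∨ k = 4 * h + 2 ∨ k = 4 * h + 3 := by omega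
      all_goals linarith
  · have h4 := add_four (4 * h - 1) (by omega)
    rw [show 4 * h - 1 + 4 = 4 * h + 3 by omega, h3] at h4
    rw [hB.one_div_height_one, two_mul, add_sub_assoc, ← h4, div_eq_iff (by linarith)]
    field_simp
    linear_combination hρ
  · rw [hB.one_div_height_two, h0]
    ring
  · rw [hB.one_div_height_three, h1, div_eq_iff (by linarith)]
    linear_combination -hρ
  · rw [h1, h3, sub_add_cancel]
  · rw [h2]
    ring

end IsRosenSequence

theorem eq_height_of_formulas {H : ℕ → ℝ}
    (hH4 : ∀ n : ℕ, 1 ≤ n → n ≤ h → H (4 * n) = B n / B ((n : ℤ) + 1))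
    (hH4m2 : ∀ n : ℕ, 1 ≤ n → n ≤ h + 1 →
      H (4 * n - 2) = (B ((n : ℤ) - 1) + B n) / (B n + B ((n : ℤ) + 1)))
    (hH4h3 : ∀ n : ℕ, n ≤ h →
      H (4 * h + 3 - 4 * n) = (B ((n : ℤ) + 1) * ρ - B n) / (B n * ρ - B ((n : ℤ) - 1)))
    (hH4h1 : ∀ n : ℕ, n ≤ h → H (4 * h + 1 - 4 * n) =
      (B ((n : ℤ) + 1) * ρ - B ((n : ℤ) + 2)) / (B n * ρ - B ((n : ℤ) + 1)))
    {k : ℕ} (hk : 1 ≤ k) (hkh : k ≤ 4 * h + 3) : H k = height B ρ h k := by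
  obtain ⟨n, i, hi, rfl⟩ : ∃ n i, i < 4 ∧ k = 4 * n + i :=
    ⟨k / 4, k % 4, Nat.mod_lt _ (by norm_num), (Nat.div_add_mod k 4).symm⟩
  have hcast : ((h - n : ℕ) : ℤ) = h - n := Nat.cast_sub (by omega)
  rw [height_four_mul_add B ρ h n hi]
  match i with
  | 0 => exact hH4 n (by omega) (by omega)
  | 1 =>
    have h₁ := hH4h1 (h - n) (by omega)
    rw [show 4 * h + 1 - 4 * (h - n) = 4 * n + 1 by omega, hcast] at h₁
    rw [h₁, heightSeq, heightSeq, ← neg_div_neg_eq, neg_sub, neg_sub]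
    ring_nf
  | 2 =>
    have h₂ := hH4m2 (n + 1) (by omega) (by omega)
    rwa [show 4 * (n + 1) - 2 = 4 * n + 2 by omega, Nat.cast_succ, add_sub_cancel_right] at h₂
  | 3 =>
    have h₃ := hH4h3 (h - n) (by omega)
    rw [show 4 * h + 3 - 4 * (h - n) = 4 * n + 3 by omega, hcast] at h₃
    rw [h₃, heightSeq, heightSeq, sub_add_eq_sub_sub, sub_add_cancel]

end HeightSystem

section StepHeight

/-- The step function with value `H k` between the breakpoints `p (k-1)` and `p k`, where the last
interval is cut off at `R`, extended by zero. -/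
noncomputable def stepHeight (p H : ℕ → ℝ) (K : ℕ) (R : ℝ) : ℝ → ℝ :=
  (Ico (p 0) R).indicator fun x ↦ H (Finset.card {k ∈ Finset.range K | p k ≤ x})

theorem countable_range_stepHeight (p H : ℕ → ℝ) (K : ℕ) (R : ℝ) :
    (range (stepHeight p H K R)).Countable := by
  refine ((countable_singleton 0).union (countable_range H)).mono ?_
  rintro _ ⟨x, rfl⟩
  by_cases hx : x ∈ Ico (p 0) R
  · exact .inr ⟨_, (indicator_of_mem hx fun x ↦ H (Finset.card _)).symm⟩
  · exact .inl (indicator_of_notMem hx _)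

theorem exists_mem_Ico_succ {p : ℕ → ℝ} {K : ℕ} {x : ℝ} (hx : x ∈ Ico (p 0) (p K)) :
    ∃ k < K, x ∈ Ico (p k) (p (k + 1)) := by
  induction K with
  | zero => exact absurd hx.2 hx.1.not_gt
  | succ K ih =>
    rcases lt_or_ge x (p K) with hlt | hge
    · obtain ⟨k, hk, hmem⟩ := ih ⟨hx.1, hlt⟩
      exact ⟨k, hk.trans K.lt_succ_self, hmem⟩
    · exact ⟨K, K.lt_succ_self, hge, hx.2⟩

theorem le_of_forall_le_succ {p : ℕ → ℝ} {K : ℕ} (hp : ∀ k < K, p k ≤ p (k + 1)) {i j : ℕ}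
    (hij : i ≤ j) (hj : j ≤ K) : p i ≤ p j :=
  monotoneOn_of_le_add_one ordConnected_Iic (fun k _ _ hk ↦ hp k hk) (hij.trans hj) hj hij

theorem stepHeight_eq_of_mem {p : ℕ → ℝ} {H : ℕ → ℝ} {K : ℕ} {R x : ℝ}
    (hp : ∀ k < K, p k ≤ p (k + 1)) {k : ℕ} (hk : k < K) (hx : x ∈ Ico (p k) (p (k + 1)))
    (hxR : x < R) : stepHeight p H K R x = H (k + 1) := by
  have hx0 : x ∈ Ico (p 0) R := ⟨(le_of_forall_le_succ hp k.zero_le hk.le).trans hx.1, hxR⟩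
  have hcount : Finset.filter (p · ≤ x) (Finset.range K) = Finset.range (k + 1) := by
    ext j
    rw [Finset.mem_filter, Finset.mem_range, Finset.mem_range, Nat.lt_succ_iff]
    refine ⟨fun ⟨hj, hjx⟩ ↦ ?_, fun hj ↦
      ⟨hj.trans_lt hk, (le_of_forall_le_succ hp hj hk.le).trans hx.1⟩⟩
    by_contra! hkj
    exact hjx.not_gt (hx.2.trans_le (le_of_forall_le_succ hp hkj hj.le))
  rw [stepHeight, indicator_of_mem hx0, hcount, Finset.card_range]

end StepHeight

section Tiling

theorem le_neg_one_div_iff {p w : ℝ} (hw : 0 < w) (hp : p < 0) :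
    p ≤ -1 / w ↔ -1 / p ≤ w := by
  rw [le_div_iff₀ hw, div_le_iff_of_neg hp, mul_comm]

theorem neg_one_div_lt_iff {p w : ℝ} (hw : 0 < w) (hp : p < 0) :
    -1 / w < p ↔ w < -1 / p := by
  rw [div_lt_iff₀ hw, lt_div_iff_of_neg hp, mul_comm]

namespace IsCutSystem

variable {h : ℕ} {lam α : ℝ} {p H : ℕ → ℝ} (hp : IsCutSystem h lam (α * lam) p)

include hp

theorem mono {i j : ℕ} (hij : i ≤ j) (hj : j ≤ 4 * h + 3) : p i ≤ p j :=
  le_of_forall_le_succ hp.le_succ hij hj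

theorem endpoint_pos : 0 < α * lam := hp.nonneg.trans_lt hp.lt

theorem rosenInterval_eq : rosenInterval lam α = Ico (p 0) (α * lam) := by
  rw [rosenInterval, hp.zero, sub_one_mul]

theorem neg_of_le {k : ℕ} (hk : k ≤ 4 * h) : p k < 0 :=
  (hp.mono hk (by omega)).trans_lt hp.neg

theorem neg_one_div_eq {k : ℕ} (hk : k < 4 * h) : -1 / p k = p (k + 4) + lam := by
  rw [hp.add_four k hk, sub_add_cancel]

theorem exists_mem_Ico {t : ℝ} (ht : t ∈ rosenInterval lam α) :
    ∃ k < 4 * h + 3, t ∈ Ico (p k) (p (k + 1)) := by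
  rw [hp.rosenInterval_eq] at ht
  exact exists_mem_Ico_succ ⟨ht.1, ht.2.trans hp.lt_last⟩

theorem stepHeight_eq {k : ℕ} (hk : k < 4 * h + 3) {x : ℝ} (hx : x ∈ Ico (p k) (p (k + 1)))
    (hxR : x < α * lam) : stepHeight p H (4 * h + 3) (α * lam) x = H (k + 1) :=
  stepHeight_eq_of_mem hp.le_succ hk hx hxR

theorem stepHeight_neg_one_div {k : ℕ} (hk : k < 4 * h) {w : ℝ} (hw : 0 < w)
    (hpw : -1 / p k ≤ w) (hwp : -1 / w < p (k + 1)) :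
    stepHeight p H (4 * h + 3) (α * lam) (-1 / w) = H (k + 1) :=
  hp.stepHeight_eq (by omega) ⟨(le_neg_one_div_iff hw (hp.neg_of_le (by omega))).2 hpw, hwp⟩
    ((div_neg_of_neg_of_pos (by norm_num) hw).trans hp.endpoint_pos)

theorem neg_one_div_add_lt_iff (hlam : 0 < lam) {w : ℝ} (hw : 0 < w) :
    -1 / (w + lam) < p (4 * h + 1) ↔ p (4 * h + 2) * w < 1 := by
  have hu := hp.nonneg
  rw [hp.reflect, neg_div, neg_div, neg_lt_neg_iff, div_lt_div_iff₀ (by positivity) (by positivity)]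
  constructor <;> intro h <;> linarith

theorem pos_and_lt_lam (hH : IsHeightSystem h lam H) {x : ℝ} (hx : x ∈ rosenInterval lam α) :
    0 < stepHeight p H (4 * h + 3) (α * lam) x ∧
      stepHeight p H (4 * h + 3) (α * lam) x < lam := by
  obtain ⟨k, hk, hxk⟩ := hp.exists_mem_Ico hx
  rw [hp.stepHeight_eq hk hxk hx.2]
  exact ⟨hH.pos _ (by omega) (by omega), hH.lt_lam _ (by omega) (by omega)⟩

theorem stepHeight_eq_zero {x : ℝ} (hx : x ∉ rosenInterval lam α) :
    stepHeight p H (4 * h + 3) (α * lam) x = 0 :=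
  indicator_of_notMem (hp.rosenInterval_eq ▸ hx) _

theorem stepHeight_adjacent (hH : IsHeightSystem h lam H) {w : ℝ} (hw : 1 / (α * lam) < w)
    (hwu : 1 / w ≠ p (4 * h + 2)) : stepHeight p H (4 * h + 3) (α * lam) (1 / w) +
      stepHeight p H (4 * h + 3) (α * lam) (-1 / (w + lam)) = lam := by
  have hlam := hH.lam_pos
  have hR := hp.endpoint_pos
  have hw0 : 0 < w := (one_div_pos.2 hR).trans hw
  have hwR : 1 / w < α * lam := (one_div_lt hw0 hR).2 hw
  have hiff := hp.neg_one_div_add_lt_iff hlam hw0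
  rw [← lt_div_iff₀ hw0] at hiff
  have hneg : -1 / (w + lam) < 0 := div_neg_of_neg_of_pos (by norm_num) (by positivity)
  rcases hwu.lt_or_gt with hlt | hgt
  · have hge : p (4 * h + 1) ≤ -1 / (w + lam) := not_lt.1 (hlt.not_gt ∘ hiff.1)
    rw [hp.stepHeight_eq (by omega) ⟨hge.trans (hneg.le.trans (by positivity)), hlt⟩ hwR,
      hp.stepHeight_eq (by omega) ⟨hge, hneg.trans_le hp.nonneg⟩ (hneg.trans hR)]
    linarith [hH.mid]
  · have hge : p (4 * h) ≤ -1 / (w + lam) := by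
      rw [le_neg_one_div_iff (by positivity) hp.neg, hp.inv_neg]
      linarith [hp.le_succ 2 (by omega), hp.three]
    rw [hp.stepHeight_eq (by omega) ⟨hgt.le, hwR.trans hp.lt_last⟩ hwR,
      hp.stepHeight_eq (by omega) ⟨hge, hiff.2 hgt⟩ (hneg.trans hR)]
    linarith [hH.top]

theorem isFibreTiling_of_bottom (hH : IsHeightSystem h lam H) {t : ℝ} {δ : ℤ}
    (htu : ∀ d : ℤ, t ≠ 1 / p (4 * h + 2) - d * lam) (hδ : 1 ≤ δ)
    (hle : ∀ d : ℤ, 1 ≤ d → 1 / (d * lam + t) ≤ α * lam → δ ≤ d)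
    (htδ : 1 / (α * lam) < δ * lam + t)
    (hbottom : 1 / stepHeight p H (4 * h + 3) (α * lam) t =
      δ * lam - stepHeight p H (4 * h + 3) (α * lam) (-1 / (δ * lam + t))) :
    IsFibreTiling lam α (stepHeight p H (4 * h + 3) (α * lam)) t δ := by
  refine ⟨hδ, hle, hbottom, fun d hd ↦ ?_⟩
  have hmul : δ * lam ≤ d * lam :=
    mul_le_mul_of_nonneg_right (by exact_mod_cast hd) hH.lam_pos.le
  rw [add_one_mul, add_right_comm]
  refine hp.stepHeight_adjacent hH (htδ.trans_le (by linarith)) fun hu ↦ htu d ?_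
  rw [← hu, one_div_one_div, add_sub_cancel_left]

theorem one_div_stepHeight_eq_two (hH : IsHeightSystem h lam H) (hh : 1 ≤ h) {t : ℝ}
    (ht : t ∈ Ico (p 0) (p 3)) :
    1 / stepHeight p H (4 * h + 3) (α * lam) t =
      2 * lam - stepHeight p H (4 * h + 3) (α * lam) (-1 / (2 * lam + t)) := by
  have hR := hp.endpoint_pos
  have hwR : 0 < lam + t := by linarith [ht.1, hp.zero]
  have hw : 0 < 2 * lam + t := by linarith [hH.lam_pos]
  have htR : t < α * lam := ht.2.trans ((hp.mono (by omega) (by omega)).trans_lt hp.lt)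
  obtain ⟨m, hm⟩ : ∃ m, 4 * h = m + 2 := ⟨4 * h - 2, by omega⟩
  have inv_m : -1 / p m = p (4 * h + 2) + lam := hm ▸ hp.neg_one_div_eq (by omega)
  have inv_succ : -1 / p (m + 1) = p 1 + 2 * lam := by
    rw [hp.neg_one_div_eq (by omega), show m + 1 + 4 = 4 * h + 3 by omega, hp.last]
    ring
  obtain ⟨k, hk, htk⟩ := exists_mem_Ico_succ ht
  rw [hp.stepHeight_eq (by omega) htk htR]
  interval_cases k
  · rw [hp.stepHeight_neg_one_div (k := m) (by omega) hw, hH.one, show 4 * h - 1 = m + 1 by omega]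
    · linarith [htk.1, hp.zero, hp.lt]
    · rw [neg_one_div_lt_iff hw (hp.neg_of_le (by omega))]
      linarith [htk.2]
  · rw [hp.stepHeight_neg_one_div (k := m + 1) (by omega) hw, hH.two, hm]
    · linarith [htk.1]
    · rw [← hm, neg_one_div_lt_iff hw hp.neg, hp.inv_neg]
      linarith [htk.2]
  · rw [hp.stepHeight_eq (k := 4 * h) (by omega) ⟨?_, ?_⟩
      ((div_neg_of_neg_of_pos (by norm_num) hw).trans hR), hH.three]
    · rw [le_neg_one_div_iff hw hp.neg, hp.inv_neg]
      linarith [htk.1]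
    · rw [two_mul, add_assoc, add_comm lam, hp.neg_one_div_add_lt_iff hH.lam_pos hwR]
      exact (mul_le_mul_of_nonneg_right hp.lt.le hwR.le).trans_lt
        ((lt_div_iff₀' hR).1 (by linarith [ht.2, hp.three]))

theorem isFibreTiling_two (hH : IsHeightSystem h lam H) (hh : 1 ≤ h) {t : ℝ}
    (ht : t ∈ Ico (p 0) (p 3)) (htu : ∀ d : ℤ, t ≠ 1 / p (4 * h + 2) - d * lam) :
    IsFibreTiling lam α (stepHeight p H (4 * h + 3) (α * lam)) t 2 := by
  have hR := hp.endpoint_pos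
  have hRt : α * lam ≤ lam + t := by linarith [ht.1, hp.zero]
  have hp3 : p 3 < α * lam := (hp.mono (by omega) (by omega)).trans_lt hp.lt
  have hw : 1 / (α * lam) < 2 * lam + t := by linarith [hp.three]
  refine hp.isFibreTiling_of_bottom hH htu one_le_two (fun d hd hdR ↦ ?_) (by exact_mod_cast hw)
    (by exact_mod_cast hp.one_div_stepHeight_eq_two hH hh ht)
  by_contra! hd2
  obtain rfl : d = 1 := by omega
  rw [Int.cast_one, one_mul, one_div_le (hR.trans_le hRt) hR] at hdR
  linarith [ht.2, hp.three]

theorem isFibreTiling_one (hH : IsHeightSystem h lam H) (hh : 1 ≤ h) {t : ℝ}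
    (ht : t ∈ Ioo (p 3) (α * lam)) (htu : ∀ d : ℤ, t ≠ 1 / p (4 * h + 2) - d * lam) :
    IsFibreTiling lam α (stepHeight p H (4 * h + 3) (α * lam)) t 1 := by
  have hw : 1 / (α * lam) < lam + t := by linarith [ht.1, hp.three]
  have hw0 := (one_div_pos.2 hp.endpoint_pos).trans hw
  refine hp.isFibreTiling_of_bottom hH htu le_rfl (fun d hd _ ↦ hd) (by rwa [Int.cast_one, one_mul])
    ?_
  rw [Int.cast_one, one_mul]
  obtain ⟨k, hk, htk⟩ := hp.exists_mem_Ico (hp.rosenInterval_eq.ge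
    ⟨(hp.mono (Nat.zero_le 3) (by omega)).trans ht.1.le, ht.2⟩)
  have hk3 : 3 ≤ k := by
    by_contra! hk3
    exact (htk.2.trans_le (hp.mono hk3 (by omega))).not_gt ht.1
  rw [hp.stepHeight_eq hk htk ht.2]
  have lt_of_lt (j : ℕ) (hj : j < 4 * h) (hlt : t < p (j + 4)) : -1 / (lam + t) < p j := by
    rw [neg_one_div_lt_iff hw0 (hp.neg_of_le hj.le), hp.neg_one_div_eq hj]
    linarith
  rcases hk3.eq_or_lt with rfl | hk4
  · have hlt := lt_of_lt 0 (by omega) htk.2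
    rw [hp.stepHeight_eq_zero fun hI ↦ hlt.not_ge (hp.rosenInterval_eq ▸ hI).1, hH.four, sub_zero]
  · obtain ⟨j, rfl⟩ : ∃ j, k = j + 4 := ⟨k - 4, by omega⟩
    rw [hp.stepHeight_neg_one_div (k := j) (by omega) hw0 ?_ (lt_of_lt (j + 1) (by omega) ?_),
      add_right_comm, hH.add_four (j + 1) (by omega) (by omega)]
    · rw [hp.neg_one_div_eq (by omega)]
      linarith [htk.1]
    · rw [add_right_comm]
      exact htk.2

theorem isHeightFunction (hH : IsHeightSystem h lam H) (hh : 1 ≤ h) (hα : 1 / 2 ≤ α)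
    (hlt : α * lam < 1) : IsHeightFunction lam α (stepHeight p H (4 * h + 3) (α * lam))
      ({p 3} ∪ range fun d : ℤ ↦ 1 / p (4 * h + 2) - d * lam) := by
  have hlam : 0 < lam := pos_of_mul_pos_right hp.endpoint_pos (by linarith)
  have eq_zero {x : ℝ} := hp.stepHeight_eq_zero (H := H) (x := x)
  refine ⟨hlam, hα, hlt, fun x ↦ ⟨fun hx ↦ ?_, fun hx ↦ (hp.pos_and_lt_lam hH hx).1⟩,
    fun x ↦ ?_, fun x ↦ ?_, fun t ht htE ↦ ?_⟩
  · by_contra hxI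
    exact hx.ne' (eq_zero hxI)
  · by_cases hx : x ∈ rosenInterval lam α
    exacts [(hp.pos_and_lt_lam hH hx).1.le, (eq_zero hx).ge]
  · by_cases hx : x ∈ rosenInterval lam α
    exacts [(hp.pos_and_lt_lam hH hx).2, (eq_zero hx).trans_lt hlam]
  · simp only [mem_union, mem_singleton_iff, mem_range, not_or, not_exists] at htE
    have htu (d : ℤ) := Ne.symm (htE.2 d)
    rw [hp.rosenInterval_eq] at ht
    rcases lt_or_gt_of_ne htE.1 with hlt3 | hgt
    · exact ⟨2, hp.isFibreTiling_two hH hh ⟨ht.1, hlt3⟩ htu⟩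
    · exact ⟨1, hp.isFibreTiling_one hH hh ⟨hgt, ht.2⟩ htu⟩

end IsCutSystem

end Tiling

section Orbits

namespace IsCutSystem

variable {h : ℕ} {lam α : ℝ} {p : ℕ → ℝ} (hp : IsCutSystem h lam (α * lam) p)

include hp

theorem mem_rosenInterval {k : ℕ} (hk : k ≤ 4 * h + 2) : p k ∈ rosenInterval lam α :=
  hp.rosenInterval_eq ▸
    ⟨hp.mono k.zero_le (by omega), (hp.mono hk (by omega)).trans_lt hp.lt⟩

variable (hlam : 0 < lam)

include hlam

theorem Tmap_of_lt {k : ℕ} (hk : k + 1 < 4 * h) : Tmap lam α (p k) = p (k + 4) :=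
  Tmap_eq_of_neg (d := 1) hlam (hp.mem_rosenInterval (by omega)) (hp.neg_of_le (by omega))
    (by rw [hp.neg_one_div_eq (by omega), Int.cast_one, one_mul, add_comm])

theorem Tmap_sub_one (hh : 1 ≤ h) : Tmap lam α (p (4 * h - 1)) = p 1 := by
  have hlast := hp.neg_one_div_eq (k := 4 * h - 1) (by omega)
  rw [show 4 * h - 1 + 4 = 4 * h + 3 by omega, hp.last] at hlast
  refine Tmap_eq_of_neg (d := 2) hlam (hp.mem_rosenInterval (by omega))
    (hp.neg_of_le (by omega)) ?_
  rw [hlast, Int.cast_ofNat]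
  ring

theorem Tmap_four_mul (hh : 1 ≤ h) : Tmap lam α (p (4 * h)) = p 2 :=
  Tmap_eq_of_neg (d := 2) hlam (hp.mem_rosenInterval (by omega)) hp.neg
    (by rw [hp.inv_neg, Int.cast_ofNat, add_comm])

theorem Tmap_endpoint (hh : 1 ≤ h) : Tmap lam α (α * lam) = p 3 :=
  Tmap_eq_of_pos (d := 1) hlam (hp.mem_rosenInterval (by omega)) hp.endpoint_pos
    (by rw [hp.three, Int.cast_one, one_mul, add_sub_cancel])

theorem iterate_Tmap {i n : ℕ} (hn : 4 * n + i ≤ 4 * h + 2) :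
    (Tmap lam α)^[n] (p i) = p (4 * n + i) := by
  induction n with
  | zero => simp
  | succ n ih =>
    rw [Function.iterate_succ_apply', ih (by omega), hp.Tmap_of_lt hlam (by omega), mul_add_one,
      add_right_comm]

theorem iterate_Tmap_left {n : ℕ} (hn : n ≤ h) :
    (Tmap lam α)^[n] ((α - 1) * lam) = p (4 * n) := by
  rw [sub_one_mul, ← hp.zero, hp.iterate_Tmap hlam (by omega), add_zero]

theorem iterate_Tmap_left_add (hh : 1 ≤ h) {n : ℕ} (hn : n ≤ h) :
    (Tmap lam α)^[h + (n + 1)] ((α - 1) * lam) = p (4 * n + 2) := by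
  rw [add_comm, Function.iterate_add_apply, hp.iterate_Tmap_left hlam le_rfl,
    Function.iterate_succ_apply, hp.Tmap_four_mul hlam hh, hp.iterate_Tmap hlam (by omega)]

theorem iterate_Tmap_right {n : ℕ} (hn : n < h) :
    (Tmap lam α)^[n + 1] (α * lam) = p (4 * n + 3) := by
  rw [Function.iterate_succ_apply, hp.Tmap_endpoint hlam (by omega),
    hp.iterate_Tmap hlam (by omega)]

theorem iterate_Tmap_right_add (hh : 1 ≤ h) {n : ℕ} (hn : n ≤ h) :
    (Tmap lam α)^[h + (n + 1)] (α * lam) = p (4 * n + 1) := by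
  obtain ⟨m, rfl⟩ : ∃ m, h = m + 1 := ⟨h - 1, by omega⟩
  have hT := hp.Tmap_sub_one hlam hh
  rw [show 4 * (m + 1) - 1 = 4 * m + 3 by omega] at hT
  rw [add_comm, Function.iterate_add_apply, hp.iterate_Tmap_right hlam m.lt_succ_self,
    Function.iterate_succ_apply, hT, hp.iterate_Tmap hlam (by omega)]

end IsCutSystem

end Orbits

section Domain

/-- The natural extension domain `Ω_α` built from two sequences `ℓ`, `r` of breakpoints and a
sequence `H` of heights. -/
def naturalExtensionDomain (h : ℕ) (ℓ r H : ℕ → ℝ) : Set (ℝ × ℝ) :=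
  (⋃ n ∈ Finset.Icc 1 h, Ico (ℓ (n - 1)) (r (h + n)) ×ˢ Icc (0 : ℝ) (H (4 * n - 3)))
    ∪ (⋃ n ∈ Finset.Icc 1 h, Ico (r (h + n)) (ℓ (h + n)) ×ˢ Icc (0 : ℝ) (H (4 * n - 2)))
    ∪ (⋃ n ∈ Finset.Icc 1 h, Ico (ℓ (h + n)) (r n) ×ˢ Icc (0 : ℝ) (H (4 * n - 1)))
    ∪ (⋃ n ∈ Finset.Icc 1 h, Ico (r n) (ℓ n) ×ˢ Icc (0 : ℝ) (H (4 * n)))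
    ∪ Ico (ℓ h) (r (2 * h + 1)) ×ˢ Icc (0 : ℝ) (H (4 * h + 1))
    ∪ Ico (r (2 * h + 1)) (ℓ (2 * h + 1)) ×ˢ Icc (0 : ℝ) (H (4 * h + 2))
    ∪ Ico (ℓ (2 * h + 1)) (r 0) ×ˢ Icc (0 : ℝ) (H (4 * h + 3))

theorem biUnion_Icc_one_congr {X : Type*} {h : ℕ} {s s' : ℕ → Set X}
    (hs : ∀ n < h, s (n + 1) = s' n) : ⋃ n ∈ Finset.Icc 1 h, s n = ⋃ n < h, s' n := by
  ext z
  simp only [mem_iUnion, Finset.mem_Icc, exists_prop]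
  constructor
  · rintro ⟨n, hn, hz⟩
    exact ⟨n - 1, by omega, by rwa [← hs _ (by omega), Nat.sub_add_cancel hn.1]⟩
  · rintro ⟨n, hn, hz⟩
    exact ⟨n + 1, by omega, by rwa [hs n hn]⟩

theorem biUnion_lt_four_mul_add_two {X : Type*} (h : ℕ) (s : ℕ → Set X) :
    ⋃ k < 4 * h + 2, s k =
      (⋃ n < h, s (4 * n)) ∪ (⋃ n < h, s (4 * n + 1)) ∪ (⋃ n < h, s (4 * n + 2)) ∪
        (⋃ n < h, s (4 * n + 3)) ∪ s (4 * h) ∪ s (4 * h + 1) := by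
  refine Subset.antisymm (iUnion₂_subset fun k hk z hz ↦ ?_) ?_
  · simp only [mem_union, mem_iUnion, exists_prop]
    obtain ⟨n, i, hi, rfl⟩ : ∃ n i, i < 4 ∧ k = 4 * n + i :=
      ⟨k / 4, k % 4, Nat.mod_lt _ (by norm_num), (Nat.div_add_mod k 4).symm⟩
    rcases lt_or_ge n h with hn | hn
    · interval_cases i
      exacts [.inl (.inl (.inl (.inl (.inl ⟨n, hn, hz⟩)))),
        .inl (.inl (.inl (.inl (.inr ⟨n, hn, hz⟩)))), .inl (.inl (.inl (.inr ⟨n, hn, hz⟩))),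
        .inl (.inl (.inr ⟨n, hn, hz⟩))]
    · obtain rfl : n = h := by omega
      obtain rfl | rfl : i = 0 ∨ i = 1 := by omega
      exacts [.inl (.inr hz), .inr hz]
  · have sub {k : ℕ} (hk : k < 4 * h + 2) : s k ⊆ ⋃ k < 4 * h + 2, s k :=
      subset_iUnion₂_of_subset k hk Subset.rfl
    simp only [union_subset_iff, iUnion_subset_iff]
    exact ⟨⟨⟨⟨⟨fun n _ ↦ sub (by omega), fun n _ ↦ sub (by omega)⟩, fun n _ ↦ sub (by omega)⟩,
      fun n _ ↦ sub (by omega)⟩, sub (by omega)⟩, sub (by omega)⟩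

theorem naturalExtensionDomain_eq_iUnion {h : ℕ} {R : ℝ} {ℓ r p : ℕ → ℝ} (H : ℕ → ℝ)
    (hℓ : ∀ n ≤ h, ℓ n = p (4 * n)) (hℓ' : ∀ n ≤ h, ℓ (h + (n + 1)) = p (4 * n + 2))
    (hr₀ : r 0 = R) (hr : ∀ n < h, r (n + 1) = p (4 * n + 3))
    (hr' : ∀ n ≤ h, r (h + (n + 1)) = p (4 * n + 1)) :
    naturalExtensionDomain h ℓ r H =
      (⋃ k < 4 * h + 2, Ico (p k) (p (k + 1)) ×ˢ Icc 0 (H (k + 1))) ∪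
        Ico (p (4 * h + 2)) R ×ˢ Icc 0 (H (4 * h + 3)) := by
  rw [naturalExtensionDomain, biUnion_lt_four_mul_add_two,
    show 2 * h + 1 = h + (h + 1) by ring, hℓ h le_rfl, hr' h le_rfl, hℓ' h le_rfl, hr₀]
  congr 4
  · congr 1
    · congr 1
      · refine biUnion_Icc_one_congr fun n hn ↦ ?_
        rw [Nat.add_sub_cancel, hℓ n hn.le, hr' n hn.le,
          show 4 * (n + 1) - 3 = 4 * n + 1 by omega]
      · refine biUnion_Icc_one_congr fun n hn ↦ ?_
        rw [hr' n hn.le, hℓ' n hn.le, show 4 * (n + 1) - 2 = 4 * n + 1 + 1 by omega]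
    · refine biUnion_Icc_one_congr fun n hn ↦ ?_
      rw [hℓ' n hn.le, hr n hn, show 4 * (n + 1) - 1 = 4 * n + 2 + 1 by omega]
  · refine biUnion_Icc_one_congr fun n hn ↦ ?_
    rw [hr n hn, hℓ (n + 1) hn, mul_add_one]

namespace IsCutSystem

variable {h : ℕ} {lam α : ℝ} {p : ℕ → ℝ} (hp : IsCutSystem h lam (α * lam) p)

include hp

theorem heightRegion_eq_iUnion (H : ℕ → ℝ) :
    heightRegion lam α (stepHeight p H (4 * h + 3) (α * lam)) =
      (⋃ k < 4 * h + 2, Ico (p k) (p (k + 1)) ×ˢ Icc 0 (H (k + 1))) ∪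
        Ico (p (4 * h + 2)) (α * lam) ×ˢ Icc 0 (H (4 * h + 3)) := by
  have hI := hp.rosenInterval_eq
  refine Subset.antisymm ?_ (union_subset (iUnion₂_subset fun k hk ↦ ?_) ?_)
  · rintro z ⟨hz, hy⟩
    obtain ⟨k, hk, hzk⟩ := hp.exists_mem_Ico hz
    rw [hp.stepHeight_eq hk hzk hz.2] at hy
    rcases (Nat.le_of_lt_succ hk).lt_or_eq with hlt | rfl
    · exact .inl (mem_iUnion₂_of_mem hlt ⟨hzk, hy⟩)
    · exact .inr ⟨⟨hzk.1, hz.2⟩, hy⟩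
  · rintro z ⟨hzk, hy⟩
    have hzR : z.1 < α * lam := hzk.2.trans ((hp.mono hk (by omega)).trans_lt hp.lt)
    refine ⟨hI ▸ ⟨(hp.mono k.zero_le (by omega)).trans hzk.1, hzR⟩, ?_⟩
    rwa [hp.stepHeight_eq (by omega) hzk hzR]
  · rintro z ⟨hzk, hy⟩
    refine ⟨hI ▸ ⟨(hp.mono (Nat.zero_le _) (by omega)).trans hzk.1, hzk.2⟩, ?_⟩
    rwa [hp.stepHeight_eq (by omega) ⟨hzk.1, hzk.2.trans hp.lt_last⟩ hzk.2]

theorem naturalExtensionDomain_eq_heightRegion (hlam : 0 < lam) (hh : 1 ≤ h) (H : ℕ → ℝ) :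
    naturalExtensionDomain h (fun n ↦ (Tmap lam α)^[n] ((α - 1) * lam))
        (fun n ↦ (Tmap lam α)^[n] (α * lam)) H =
      heightRegion lam α (stepHeight p H (4 * h + 3) (α * lam)) := by
  rw [hp.heightRegion_eq_iUnion]
  exact naturalExtensionDomain_eq_iUnion H (fun n ↦ hp.iterate_Tmap_left hlam)
    (fun n ↦ hp.iterate_Tmap_left_add hlam hh) rfl (fun n ↦ hp.iterate_Tmap_right hlam)
    (fun n ↦ hp.iterate_Tmap_right_add hlam hh)

end IsCutSystem

end Domain

section Rho

/-- The positive root `ρ` of `ρ² + (2 - λ)ρ = 1`, which bounds the right endpoint `αλ`. -/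
noncomputable def rosenRho (lam : ℝ) : ℝ := (lam - 2 + Real.sqrt (lam ^ 2 - 4 * lam + 8)) / 2

theorem rosenRho_pos (lam : ℝ) : 0 < rosenRho lam := by
  have hsqrt : 2 - lam < Real.sqrt (lam ^ 2 - 4 * lam + 8) := Real.lt_sqrt_of_sq_lt (by linarith)
  rw [rosenRho]
  linarith

theorem rosenRho_quadratic (lam : ℝ) : rosenRho lam ^ 2 + (2 - lam) * rosenRho lam = 1 := by
  have hsq : Real.sqrt (lam ^ 2 - 4 * lam + 8) ^ 2 = lam ^ 2 - 4 * lam + 8 :=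
    Real.sq_sqrt (by linarith [sq_nonneg (lam - 2)])
  rw [rosenRho]
  linear_combination hsq / 4

theorem isAdmissibleEndpoint_of_lt_rosenRho_div {lam α : ℝ} (hlam1 : 1 < lam) (hlam2 : lam < 2)
    (hα1 : 1 / 2 ≤ α) (hα2 : α < rosenRho lam / lam) : IsAdmissibleEndpoint lam (α * lam) := by
  have hR : α * lam < rosenRho lam := (lt_div_iff₀ (by linarith)).1 hα2
  have hhalf : lam / 2 ≤ α * lam := by nlinarith
  refine ⟨hlam1, hlam2, hhalf, ?_⟩
  rw [← rosenRho_quadratic lam]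
  nlinarith

end Rho

/-- Theorem 2.12 (continued): for odd `q = 2h+3` and `1/2 ≤ α < ρ/λ`, the natural extension
map `𝒯_α` is a bijection of `Ω_α = ⋃_{n=1}^{4h+3} Jₙ × [0, Hₙ]` off of a set of
two-dimensional Lebesgue measure zero. -/
theorem stmt14 (h q : ℕ) (hh : 1 ≤ h) (hq : q = 2 * h + 3) (lam α ρ : ℝ)
    (hlam : lam = 2 * Real.cos (Real.pi / q))
    (hρ : ρ = (lam - 2 + Real.sqrt (lam ^ 2 - 4 * lam + 8)) / 2)
    (hα1 : 1 / 2 ≤ α) (hα2 : α < ρ / lam)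
    (B : ℤ → ℝ)
    (hB : ∀ n : ℤ, B n = Real.sin (n * Real.pi / q) / Real.sin (Real.pi / q))
    (ℓ r : ℕ → ℝ)
    (hℓ : ∀ n, ℓ n = (Tmap lam α)^[n] ((α - 1) * lam))
    (hr : ∀ n, r n = (Tmap lam α)^[n] (α * lam))
    (H : ℕ → ℝ)
    (hH4 : ∀ n : ℕ, 1 ≤ n → n ≤ h → H (4 * n) = B n / B ((n : ℤ) + 1))
    (hH4m2 : ∀ n : ℕ, 1 ≤ n → n ≤ h + 1 →
      H (4 * n - 2) = (B ((n : ℤ) - 1) + B n) / (B n + B ((n : ℤ) + 1)))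
    (hH4h3 : ∀ n : ℕ, n ≤ h →
      H (4 * h + 3 - 4 * n) = (B ((n : ℤ) + 1) * ρ - B n) / (B n * ρ - B ((n : ℤ) - 1)))
    (hH4h1 : ∀ n : ℕ, n ≤ h →
      H (4 * h + 1 - 4 * n) = (B ((n : ℤ) + 1) * ρ - B ((n : ℤ) + 2)) / (B n * ρ - B ((n : ℤ) + 1)))
    (Ω : Set (ℝ × ℝ))
    (hΩ : Ω = (⋃ n ∈ Finset.Icc 1 h, Ico (ℓ (n - 1)) (r (h + n)) ×ˢ Icc (0 : ℝ) (H (4 * n - 3)))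
      ∪ (⋃ n ∈ Finset.Icc 1 h, Ico (r (h + n)) (ℓ (h + n)) ×ˢ Icc (0 : ℝ) (H (4 * n - 2)))
      ∪ (⋃ n ∈ Finset.Icc 1 h, Ico (ℓ (h + n)) (r n) ×ˢ Icc (0 : ℝ) (H (4 * n - 1)))
      ∪ (⋃ n ∈ Finset.Icc 1 h, Ico (r n) (ℓ n) ×ˢ Icc (0 : ℝ) (H (4 * n)))
      ∪ Ico (ℓ h) (r (2 * h + 1)) ×ˢ Icc (0 : ℝ) (H (4 * h + 1))
      ∪ Ico (r (2 * h + 1)) (ℓ (2 * h + 1)) ×ˢ Icc (0 : ℝ) (H (4 * h + 2))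
      ∪ Ico (ℓ (2 * h + 1)) (r 0) ×ˢ Icc (0 : ℝ) (H (4 * h + 3))) :
    ∃ N N' : Set (ℝ × ℝ), N ⊆ Ω ∧ N' ⊆ Ω ∧ volume N = 0 ∧ volume N' = 0 ∧
      Set.BijOn (Tnat lam α) (Ω \ N) (Ω \ N') := by
  subst hq
  have hB' : IsRosenSequence h lam B := by
    obtain rfl : B = sinRatio (Real.pi / (2 * h + 3)) := by
      ext n
      rw [hB, sinRatio, mul_div_assoc]
      push_cast
      rfl
    rw [hlam]
    push_cast
    exact isRosenSequence_sinRatio h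
  obtain rfl : ρ = rosenRho lam := hρ
  have hR := isAdmissibleEndpoint_of_lt_rosenRho_div (hB'.one_lt hh) hB'.lt_two hα1 hα2
  have hp := hR.isCutSystem hB'
  have hH : IsHeightSystem h lam H :=
    (hB'.isHeightSystem hh (rosenRho_pos lam) (rosenRho_quadratic lam)).congr hh
      fun k ↦ eq_height_of_formulas hH4 hH4m2 hH4h3 hH4h1
  have hΩ' : Ω = heightRegion lam α (stepHeight (cut B lam (α * lam)) H (4 * h + 3) (α * lam)) := by
    rw [← hp.naturalExtensionDomain_eq_heightRegion hH.lam_pos hh H, ← funext hℓ, ← funext hr]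
    exact hΩ
  rw [hΩ']
  exact (hp.isHeightFunction hH hh hα1 hR.lt_one).exists_null_bijOn_Tnat
    ((countable_singleton _).union (countable_range _)) (countable_range_stepHeight ..)
end

section
/- Let q = 2h+3 with h ≥ 1, λ = 2cos(π/q), ρ = (λ − 2 + √(λ² − 4λ + 8))/2, and 1/2 ≤ α < ρ/λ. Then the integral of (1+xy)^{−2} over the natural extension region Ω_α = ⋃_{n=1}^{4h+3} J_n × [0,H_n] described below equals log((1 + ρ)/√(2 − λ)) = log((1 + ρ)/(2 sin(π/(2q)))); equivalently, the normalizing constant of the invariant probability density C_{q,α}/(1+xy)² on Ω_α is C_{q,α} = 1/log((1 + ρ)/√(2 − λ)), independent of α in this range. -/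
open Set MeasureTheory

/-!
The orbits of the two endpoints `ℓ_0 = w - λ` and `r_0 = w`, where `w = αλ`, are interlaced in the
order `ℓ_0 ≤ r_{h+1} ≤ ℓ_{h+1} ≤ r_1 ≤ ℓ_1 ≤ r_{h+2} ≤ …`, so `Ω_α` is a staircase, and the mass of
each of its rectangles is a difference of two logarithms. Moving four rectangles to the right
applies `x ↦ -1/x - λ` to the endpoints and `y ↦ 1/(λ - y)` to the height. This map preserves
`dx dy / (1 + xy)²` and sends `[a, b) × [0, y]` to a rectangle based at height `1/λ`; the strip
missing below it has mass `log (-a) - log (-b)`. Hence four consecutive rectangles starting at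
`ℓ_n` have total mass `-log (-ℓ_n)`. Since `ℓ_n` is a quotient of consecutive terms of a solution
of `x_{n+2} = λ x_{n+1} - x_n`, these totals telescope to minus the logarithm of its term at the
middle index `h + 1`, where the symmetry `B_{q-n} = B_n` gives a closed form. Cutting the staircase
at `r_0` instead of completing the last block cancels all dependence on `w`.
-/

namespace Rosen

section Integral

/-- The closed form of `∫ (1 + xy)⁻²` over the rectangle `[a, b) × [0, y]`. -/
noncomputable def mass (a b y : ℝ) : ℝ := Real.log (1 + b * y) - Real.log (1 + a * y)

/-- The region under the step function that takes the value `H k` on `[c k, c (k + 1))` for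
`k < N`, the common shape of the sets `Ω_α`. -/
def staircase (c H : ℕ → ℝ) (N : ℕ) : Set (ℝ × ℝ) :=
  ⋃ k ∈ Finset.range N, Ico (c k) (c (k + 1)) ×ˢ Icc 0 (H k)

variable {a b x y H : ℝ}

lemma one_add_mul_pos (haH : 0 < 1 + a * H) (hax : a ≤ x) (hy : 0 ≤ y) (hyH : y ≤ H) :
    0 < 1 + x * y := by
  rcases le_total 0 x with hx | hx
  · positivity
  · calc 0 < 1 + a * H := haH
      _ ≤ 1 + x * H := by gcongr; exact hy.trans hyH
      _ ≤ 1 + x * y := by linarith [mul_le_mul_of_nonpos_left hyH hx]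

lemma integrableOn_rect (haH : 0 < 1 + a * H) :
    IntegrableOn (fun z : ℝ × ℝ => 1 / (1 + z.1 * z.2) ^ 2) (Ico a b ×ˢ Icc 0 H) := by
  refine IntegrableOn.mono_set (t := Icc a b ×ˢ Icc 0 H) ?_ (prod_mono_left Ico_subset_Icc_self)
  refine ContinuousOn.integrableOn_compact (isCompact_Icc.prod isCompact_Icc) ?_
  refine continuousOn_const.div (by fun_prop) ?_
  rintro z ⟨hx, hy⟩
  exact pow_ne_zero 2 (one_add_mul_pos haH hx.1 hy.1 hy.2).ne'

lemma integral_one_div_one_add_mul_sq (hH : 0 ≤ H) (hxH : 0 < 1 + x * H) :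
    ∫ y in Icc 0 H, 1 / (1 + x * y) ^ 2 = H / (1 + x * H) := by
  have hpos : ∀ y ∈ uIcc 0 H, 1 + x * y ≠ 0 := by
    intro y hy
    rw [uIcc_of_le hH] at hy
    exact (one_add_mul_pos hxH le_rfl hy.1 hy.2).ne'
  rw [integral_Icc_eq_integral_Ioc, ← intervalIntegral.integral_of_le hH,
    intervalIntegral.integral_eq_sub_of_hasDerivAt (f := fun y => y / (1 + x * y))]
  · simp
  · intro y hy
    have hderiv := (hasDerivAt_id' y).fun_div
      (((hasDerivAt_id' y).const_mul x).const_add 1) (hpos y hy)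
    rwa [show 1 * (1 + x * y) - y * (x * 1) = 1 by ring] at hderiv
  · refine ContinuousOn.intervalIntegrable (continuousOn_const.div (by fun_prop) ?_)
    exact fun y hy => pow_ne_zero 2 (hpos y hy)

lemma integral_div_one_add_mul (haH : 0 < 1 + a * H) (hab : a ≤ b) (hH : 0 ≤ H) :
    ∫ x in Ico a b, H / (1 + x * H) = mass a b H := by
  have hpos : ∀ x ∈ uIcc a b, 1 + x * H ≠ 0 := by
    intro x hx
    rw [uIcc_of_le hab] at hx
    exact (one_add_mul_pos haH hx.1 hH le_rfl).ne'
  rw [integral_Ico_eq_integral_Ioo, ← integral_Ioc_eq_integral_Ioo,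
    ← intervalIntegral.integral_of_le hab,
    intervalIntegral.integral_eq_sub_of_hasDerivAt (f := fun x => Real.log (1 + x * H))]
  · rfl
  · intro x hx
    simpa using (((hasDerivAt_id x).mul_const H).const_add 1).log (hpos x hx)
  · exact ContinuousOn.intervalIntegrable (continuousOn_const.div (by fun_prop) hpos)

lemma integral_rect (haH : 0 < 1 + a * H) (hab : a ≤ b) (hH : 0 ≤ H) :
    ∫ z in Ico a b ×ˢ Icc 0 H, 1 / (1 + z.1 * z.2) ^ 2 = mass a b H := by
  have hint := integrableOn_rect (b := b) haH
  rw [Measure.volume_eq_prod] at hint ⊢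
  rw [setIntegral_prod _ hint, ← integral_div_one_add_mul haH hab hH]
  refine setIntegral_congr_fun measurableSet_Ico fun x hx => ?_
  exact integral_one_div_one_add_mul_sq hH (one_add_mul_pos haH hx.1 hH le_rfl)

lemma integral_staircase {c H : ℕ → ℝ} {N : ℕ} (hc : Monotone c) (hH : ∀ k < N, 0 ≤ H k)
    (hcH : ∀ k < N, 0 < 1 + c k * H k) :
    ∫ z in staircase c H N, 1 / (1 + z.1 * z.2) ^ 2
      = ∑ k ∈ Finset.range N, mass (c k) (c (k + 1)) (H k) := by
  rw [staircase, integral_biUnion_finset]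
  · refine Finset.sum_congr rfl fun k hk => ?_
    rw [Finset.mem_range] at hk
    exact integral_rect (hcH k hk) (hc k.le_succ) (hH k hk)
  · exact fun k _ => measurableSet_Ico.prod measurableSet_Icc
  · exact fun i _ j _ hij => (hc.pairwise_disjoint_on_Ico_succ hij).set_prod_left _ _
  · exact fun k hk => integrableOn_rect (hcH k (Finset.mem_range.1 hk))

end Integral

section Branch

variable {lam a b y s r : ℝ}

/-- The branch of `T_α` on the negative numbers of digit `1`. -/
noncomputable def branch (lam x : ℝ) : ℝ := -1 / x - lam

/-- The action on the second coordinate of the natural extension above `branch`. -/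
noncomputable def fibre (lam y : ℝ) : ℝ := 1 / (lam - y)

lemma branch_le_branch (hb : b < 0) (hab : a ≤ b) : branch lam a ≤ branch lam b := by
  have := one_div_le_one_div_of_neg_of_le hb hab
  simp only [branch, neg_div]
  linarith

lemma one_add_branch_mul_fibre (ha : a < 0) (hy : y < lam) :
    1 + branch lam a * fibre lam y = (1 + a * y) / (-a * (lam - y)) := by
  have hlam : lam - y ≠ 0 := (sub_pos.2 hy).ne'
  have ha' : a ≠ 0 := ha.ne
  simp only [branch, fibre]
  field_simp
  ring

lemma mass_branch_fibre (ha : a < 0) (hb : b < 0) (hy : y < lam) (hay : 0 < 1 + a * y)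
    (hby : 0 < 1 + b * y) :
    mass (branch lam a) (branch lam b) (fibre lam y)
      = mass a b y + Real.log (-a) - Real.log (-b) := by
  have hlog : ∀ {t : ℝ}, t < 0 → 0 < 1 + t * y →
      Real.log (1 + branch lam t * fibre lam y)
        = Real.log (1 + t * y) - (Real.log (-t) + Real.log (lam - y)) := by
    intro t ht hty
    have hlam : lam - y ≠ 0 := (sub_pos.2 hy).ne'
    have ht' : -t ≠ 0 := (neg_pos.2 ht).ne'
    rw [one_add_branch_mul_fibre ht hy, Real.log_div hty.ne' (mul_ne_zero ht' hlam),
      Real.log_mul ht' hlam]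
  rw [mass, mass, hlog ha hay, hlog hb hby]
  ring

lemma mass_one_div (hs : 0 < s) (ha : 0 < a + s) (hr : r ≠ 0) (hb : b + s = r * (a + s)) :
    mass a b (1 / s) = Real.log r := by
  have hlog : ∀ t, 1 + t * (1 / s) = (t + s) / s := by
    intro t
    field_simp
    ring
  rw [mass, hlog, hlog, hb, mul_div_assoc, Real.log_mul hr (div_pos ha hs).ne',
    add_sub_cancel_right]

end Branch

section Recurrence

variable {lam : ℝ} {x : ℕ → ℝ} {n : ℕ}

/-- The three-term recurrence solved by the sequences `B`, through which the iterates of `branch`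
and `fibre` become quotients of consecutive terms. -/
def IsRosenSeq (lam : ℝ) (x : ℕ → ℝ) : Prop :=
  ∀ n, x (n + 2) = lam * x (n + 1) - x n

lemma IsRosenSeq.iterate_branch (hx : IsRosenSeq lam x) (hne : ∀ k < n, x (k + 1) ≠ 0) :
    (branch lam)^[n] (-(x 1 / x 0)) = -(x (n + 1) / x n) := by
  induction n with
  | zero => rfl
  | succ n ih =>
    have hn := hne n n.lt_succ_self
    rw [Function.iterate_succ_apply', ih fun k hk => hne k (hk.trans n.lt_succ_self), branch,
      neg_div_neg_eq, one_div_div, hx n]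
    field_simp
    ring

lemma IsRosenSeq.pos_of_iterate_branch_neg (hx : IsRosenSeq lam x) (h0 : 0 < x 0)
    (hneg : ∀ k < n, (branch lam)^[k] (-(x 1 / x 0)) < 0) : ∀ k ≤ n, 0 < x k := by
  induction n with
  | zero => rintro k hk; rwa [Nat.le_zero.1 hk]
  | succ n ih =>
    have ih := ih fun k hk => hneg k (hk.trans n.lt_succ_self)
    have hn := hneg n n.lt_succ_self
    rw [hx.iterate_branch fun k hk => (ih (k + 1) hk).ne', neg_lt_zero] at hn
    intro k hk
    rcases hk.lt_or_eq with hk | rfl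
    · exact ih k (Nat.lt_succ_iff.1 hk)
    · exact (div_pos_iff_of_pos_right (ih n le_rfl)).1 hn

lemma neg_one_div_semiconj : Function.Semiconj (fun y : ℝ => -1 / y) (fibre lam) (branch lam) := by
  intro y
  simp only [fibre, branch, neg_div, one_div, inv_neg, inv_inv, neg_neg]
  ring

lemma IsRosenSeq.iterate_fibre (hx : IsRosenSeq lam x) (hne : ∀ k < n, x (k + 1) ≠ 0) :
    (fibre lam)^[n] (x 0 / x 1) = x n / x (n + 1) := by
  have hconj := neg_one_div_semiconj.iterate_right n (x 0 / x 1) (ga := fibre lam)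
  rwa [neg_div, neg_div, one_div_div, hx.iterate_branch hne, neg_inj, one_div,
    inv_eq_iff_eq_inv, inv_div] at hconj

lemma apply_four_mul_add {β : Type*} {f : β → β} {x : ℕ → β} (hx : ∀ k, x (k + 4) = f (x k))
    (n i : ℕ) : x (4 * n + i) = f^[n] (x i) := by
  induction n with
  | zero => rw [mul_zero, zero_add, Function.iterate_zero_apply]
  | succ n ih =>
    rw [Function.iterate_succ_apply', ← ih, ← hx]
    congr 1
    ring

end Recurrence

section SineQuotients

/-- The angle `π / q` for `q = 2h + 3`. -/
noncomputable def angle (h : ℕ) : ℝ := Real.pi / (2 * h + 3)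

/-- The sine quotient `B_n = sin (nπ/q) / sin (π/q)`. -/
noncomputable def B (h : ℕ) (n : ℤ) : ℝ := Real.sin (n * angle h) / Real.sin (angle h)

/-- The form `v B_n - B_{n-1}`: the solution of the recurrence of the `B_n` with the values `1` at
`0` and `v` at `1`. The breakpoints and heights of `Ω_α` are quotients of such forms. -/
noncomputable def den (h : ℕ) (v : ℝ) (n : ℤ) : ℝ := v * B h n - B h (n - 1)

variable (h : ℕ) (n : ℤ) {v : ℝ}

lemma pi_div_cast_eq_angle : Real.pi / (2 * h + 3 : ℕ) = angle h := by
  rw [angle]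
  push_cast
  rfl

lemma angle_pos : 0 < angle h := by unfold angle; positivity

lemma mul_angle : (2 * h + 3 : ℝ) * angle h = Real.pi := by
  unfold angle
  field_simp

lemma angle_half_lt : angle h / 2 < Real.pi / 2 := by
  have := angle_pos h
  have : (0 : ℝ) ≤ h * angle h := by positivity
  linarith [mul_angle h]

lemma sin_angle_pos : 0 < Real.sin (angle h) := by
  refine Real.sin_pos_of_pos_of_lt_pi (angle_pos h) ?_
  have : (0 : ℝ) ≤ h * angle h := mul_nonneg h.cast_nonneg (angle_pos h).le
  linarith [mul_angle h, angle_pos h]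

lemma sin_half_angle_pos : 0 < Real.sin (angle h / 2) :=
  Real.sin_pos_of_pos_of_lt_pi (half_pos (angle_pos h)) (by linarith [angle_half_lt h, Real.pi_pos])

lemma cos_half_angle_pos : 0 < Real.cos (angle h / 2) :=
  Real.cos_pos_of_mem_Ioo ⟨by linarith [angle_pos h, Real.pi_pos], angle_half_lt h⟩

lemma cos_angle_pos : 0 < Real.cos (angle h) := by
  have hangle := angle_pos h
  have : (0 : ℝ) ≤ h * angle h := by positivity
  exact Real.cos_pos_of_mem_Ioo ⟨by linarith [Real.pi_pos], by linarith [mul_angle h]⟩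

lemma sin_angle : Real.sin (angle h) = 2 * Real.sin (angle h / 2) * Real.cos (angle h / 2) := by
  rw [← Real.sin_two_mul, mul_div_cancel₀ _ two_ne_zero]

lemma B_zero : B h 0 = 0 := by simp [B]

lemma B_one : B h 1 = 1 := by simp [B, (sin_angle_pos h).ne']

lemma B_add_one : B h (n + 1) = Real.cos (angle h) * B h n + Real.cos (n * angle h) := by
  have := (sin_angle_pos h).ne'
  rw [B, B]
  push_cast
  rw [add_one_mul, Real.sin_add]
  field_simp

lemma B_sub_one : B h (n - 1) = Real.cos (angle h) * B h n - Real.cos (n * angle h) := by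
  have := (sin_angle_pos h).ne'
  rw [B, B]
  push_cast
  rw [sub_one_mul, Real.sin_sub]
  field_simp

lemma B_reflect : B h (2 * h + 3 - n) = B h n := by
  rw [B, B]
  push_cast
  rw [sub_mul, mul_angle, Real.sin_pi_sub]

lemma B_add_one_sub :
    B h (n + 1) - B h n = Real.cos ((n + 1 / 2) * angle h) / Real.cos (angle h / 2) := by
  have := (sin_half_angle_pos h).ne'
  have := (cos_half_angle_pos h).ne'
  rw [B, B, ← sub_div, Real.sin_sub_sin, sin_angle]
  push_cast
  rw [show ((n + 1) * angle h - n * angle h) / 2 = angle h / 2 by ring,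
    show ((n + 1) * angle h + n * angle h) / 2 = (n + 1 / 2) * angle h by ring]
  field_simp

variable {n}

lemma B_le_B_add_one (h0 : 0 ≤ n) (hn : n ≤ h + 1) : B h n ≤ B h (n + 1) := by
  have h0' : (0 : ℝ) ≤ n := by exact_mod_cast h0
  have hn' : (n : ℝ) ≤ h + 1 := by exact_mod_cast hn
  rw [← sub_nonneg, B_add_one_sub]
  refine div_nonneg (Real.cos_nonneg_of_mem_Icc ⟨?_, ?_⟩) (cos_half_angle_pos h).le
  · have : 0 ≤ (n + 1 / 2) * angle h := mul_nonneg (by linarith) (angle_pos h).le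
    linarith [Real.pi_pos]
  · calc (n + 1 / 2) * angle h ≤ (h + 1 + 1 / 2) * angle h := by gcongr; exact (angle_pos h).le
      _ = Real.pi / 2 := by linarith [mul_angle h]

lemma B_pos (h0 : 0 < n) (hn : n < 2 * h + 3) : 0 < B h n := by
  have h0' : (0 : ℝ) < n := by exact_mod_cast h0
  have hn' : (n : ℝ) < 2 * h + 3 := by exact_mod_cast hn
  have hθ := angle_pos h
  refine div_pos (Real.sin_pos_of_pos_of_lt_pi (mul_pos h0' hθ) ?_) (sin_angle_pos h)
  calc n * angle h < (2 * h + 3) * angle h := by gcongr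
    _ = Real.pi := mul_angle h

lemma B_middle_succ : B h (h + 2) = B h (h + 1) := by
  rw [← B_reflect h (h + 1)]
  ring_nf

lemma B_middle : B h (h + 1) = 1 / (2 * Real.sin (angle h / 2)) := by
  have := (sin_half_angle_pos h).ne'
  have := (cos_half_angle_pos h).ne'
  have hmid : (h + 1) * angle h = Real.pi / 2 - angle h / 2 := by linarith [mul_angle h]
  rw [B]
  push_cast
  rw [hmid, Real.sin_pi_div_two_sub, sin_angle]
  field_simp

lemma two_sub_two_mul_cos : 2 - 2 * Real.cos (angle h) = (2 * Real.sin (angle h / 2)) ^ 2 := by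
  have hcos := Real.cos_sq' (angle h / 2)
  rw [Real.cos_sq, mul_div_cancel₀ _ two_ne_zero] at hcos
  linear_combination -4 * hcos

lemma den_zero : den h v 0 = 1 := by
  rw [den, B_sub_one]
  simp [B_zero]

lemma den_one : den h v 1 = v := by simp [den, B_zero, B_one]

variable {h} {lam : ℝ} (hlam : lam = 2 * Real.cos (angle h))
include hlam

lemma B_recurrence (n : ℤ) : B h (n + 1) = lam * B h n - B h (n - 1) := by
  rw [hlam, B_add_one, B_sub_one]
  ring

lemma den_recurrence (v : ℝ) (n : ℤ) : den h v (n + 1) = lam * den h v n - den h v (n - 1) := by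
  have h1 := B_recurrence hlam n
  have h2 := B_recurrence hlam (n - 1)
  rw [sub_add_cancel] at h2
  rw [den, den, den, add_sub_cancel_right]
  linear_combination v * h1 - h2

lemma isRosenSeq_den (v : ℝ) : IsRosenSeq lam fun n => den h v n := by
  intro n
  have := den_recurrence hlam v (n + 1)
  push_cast
  rwa [add_sub_cancel_right, add_assoc, one_add_one_eq_two] at this

lemma isRosenSeq_den_sub (v : ℝ) (a : ℤ) : IsRosenSeq lam fun n => den h v (a - n) := by
  intro n
  have := den_recurrence hlam v (a - n - 1)
  push_cast
  rw [sub_add_cancel] at this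
  rw [show a - (n + 2 : ℤ) = a - n - 1 - 1 by ring, ← sub_sub]
  linarith

lemma den_eq (v : ℝ) (n : ℤ) :
    den h v n = (v - lam + 1) * B h n + (B h (n + 1) - B h n) := by
  rw [den, B_recurrence hlam]
  ring

lemma den_lam (n : ℤ) : den h lam n = B h (n + 1) := by
  rw [den_eq hlam]
  ring

lemma den_lam_add_one (n : ℤ) : den h (lam + 1) n = B h n + B h (n + 1) := by
  rw [den_eq hlam]
  ring

lemma den_lam_sub (v : ℝ) (n : ℤ) : den h (lam - v) n = B h (n + 1) - v * B h n := by
  rw [den_eq hlam]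
  ring

lemma den_pos (hv : lam - 1 < v) (h0 : 0 ≤ n) (hn : n ≤ h + 1) : 0 < den h v n := by
  rcases h0.eq_or_lt with rfl | hpos
  · rw [den_zero]
    exact one_pos
  · rw [den_eq hlam]
    exact add_pos_of_pos_of_nonneg (mul_pos (by linarith) (B_pos h hpos (by lia)))
      (sub_nonneg.2 (B_le_B_add_one h h0 hn))

lemma den_middle (v : ℝ) : den h v (h + 1) = B h (h + 1) * (v - lam + 1) := by
  rw [den_eq hlam, add_assoc, one_add_one_eq_two, B_middle_succ]
  ring

omit hlam in
lemma den_middle_succ (v : ℝ) : den h v (h + 2) = B h (h + 1) * (v - 1) := by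
  rw [den, B_middle_succ, show (h : ℤ) + 2 - 1 = h + 1 by ring]
  ring

lemma den_middle_pred (v : ℝ) :
    den h v h = B h (h + 1) * ((lam - 1) * v - lam ^ 2 + lam + 1) := by
  have := den_recurrence hlam v (h + 1)
  rw [add_sub_cancel_right, add_assoc, one_add_one_eq_two, den_middle_succ, den_middle hlam] at this
  linear_combination this

end SineQuotients

section Orbit

/-- The orbits of the endpoints `ℓ_0 = w - λ` and `r_0 = w`, where `w = αλ`, interlaced in the order
of the real line: `ℓ_0, r_{h+1}, ℓ_{h+1}, r_1, ℓ_1, r_{h+2}, …`. The values at `1` and `2` are the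
closed forms of `r_{h+1}` and `ℓ_{h+1}`; on the points before those the map `T_α` has digit `2`. -/
noncomputable def orbit (lam w : ℝ) : ℕ → ℝ
  | 0 => w - lam
  | 1 => (1 - w) / (w - lam + 1) - lam
  | 2 => (w - lam + 1) / (1 - w) - lam
  | 3 => 1 / w - lam
  | k + 4 => branch lam (orbit lam w k)

/-- The parameters of the theorem, with `w = αλ` and with `ρ` given by its quadratic equation. -/
structure Admissible (h : ℕ) (lam ρ w : ℝ) : Prop where
  one_le : 1 ≤ h
  lam_eq : lam = 2 * Real.cos (angle h)
  rho_pos : 0 < ρ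
  rho_quad : ρ ^ 2 + (2 - lam) * ρ = 1
  half_lam_le : lam / 2 ≤ w
  w_lt : w < ρ

variable {h : ℕ} {lam ρ w : ℝ}

lemma orbit_add_four (lam w : ℝ) (k : ℕ) : orbit lam w (k + 4) = branch lam (orbit lam w k) := rfl

lemma orbit_four_mul_add (lam w : ℝ) (n i : ℕ) :
    orbit lam w (4 * n + i) = (branch lam)^[n] (orbit lam w i) :=
  apply_four_mul_add (orbit_add_four lam w) n i

namespace Admissible

variable (P : Admissible h lam ρ w)
include P

lemma lam_lt_two : lam < 2 := by
  have hsq := two_sub_two_mul_cos h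
  have := sin_half_angle_pos h
  rw [← P.lam_eq] at hsq
  rw [← sub_pos, hsq]
  positivity

lemma one_lt_lam : 1 < lam := by
  have hh : (1 : ℝ) ≤ h := by exact_mod_cast P.one_le
  have hlt : angle h < Real.pi / 3 :=
    div_lt_div_of_pos_left Real.pi_pos (by norm_num) (by linarith)
  have := Real.cos_lt_cos_of_nonneg_of_le_pi (angle_pos h).le (by linarith [Real.pi_pos]) hlt
  rw [Real.cos_pi_div_three] at this
  linarith [P.lam_eq]

lemma rho_lt_one : ρ < 1 := by
  by_contra! hle
  nlinarith [P.rho_quad, P.lam_lt_two]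

lemma w_pos : 0 < w := by linarith [P.one_lt_lam, P.half_lam_le]

lemma w_lt_one : w < 1 := P.w_lt.trans P.rho_lt_one

lemma w_lt_lam : w < lam := P.w_lt_one.trans P.one_lt_lam

lemma w_quad : w ^ 2 + (2 - lam) * w < 1 := by
  nlinarith [P.rho_quad, P.w_pos, P.w_lt, P.lam_lt_two]

lemma w_sub_lam_add_one_pos : 0 < w - lam + 1 := by linarith [P.lam_lt_two, P.half_lam_le]

lemma rho_sub_lam_add_one_pos : 0 < ρ - lam + 1 := by linarith [P.w_sub_lam_add_one_pos, P.w_lt]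

lemma den_lam_sub_w_pos {n : ℤ} (h0 : 0 ≤ n) (hn : n ≤ h + 1) : 0 < den h (lam - w) n :=
  den_pos P.lam_eq (by linarith [P.w_lt_one]) h0 hn

lemma den_w_pos {n : ℤ} (h0 : 0 ≤ n) (hn : n ≤ h + 1) : 0 < den h w n :=
  den_pos P.lam_eq (by linarith [P.w_sub_lam_add_one_pos]) h0 hn

lemma orbit_four_mul {n : ℕ} (hn : n ≤ h + 1) :
    orbit lam w (4 * n) = -(den h (lam - w) (n + 1) / den h (lam - w) n) := by
  have hiter := (isRosenSeq_den P.lam_eq (lam - w)).iterate_branch (n := n)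
    fun k hk => (P.den_lam_sub_w_pos (by lia) (by lia)).ne'
  have hseed : -(den h (lam - w) (1 : ℕ) / den h (lam - w) (0 : ℕ)) = orbit lam w 0 := by
    rw [Nat.cast_one, Nat.cast_zero, den_one, den_zero, orbit]
    ring
  rw [hseed, ← orbit_four_mul_add] at hiter
  exact_mod_cast hiter

lemma orbit_four_mul_neg {n : ℕ} (hn : n ≤ h) : orbit lam w (4 * n) < 0 := by
  rw [P.orbit_four_mul (by lia), neg_lt_zero]
  exact div_pos (P.den_lam_sub_w_pos (by lia) (by lia)) (P.den_lam_sub_w_pos (by lia) (by lia))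

lemma orbit_top : orbit lam w (4 * h + 4) = (w - lam + 1) / (1 - w) := by
  have hB := (B_pos h (n := h + 1) (by lia) (by lia)).ne'
  rw [← mul_add_one, P.orbit_four_mul le_rfl]
  push_cast
  rw [add_assoc, one_add_one_eq_two, den_middle_succ, den_middle P.lam_eq,
    mul_div_mul_left _ _ hB, ← neg_div]
  congr 1 <;> ring

lemma orbit_below_top : orbit lam w (4 * h + 3) = (1 - w) / (w - lam + 1) := by
  have hB := (B_pos h (n := h + 1) (by lia) (by lia)).ne'
  have hiter := (isRosenSeq_den P.lam_eq w).iterate_branch (n := h + 1)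
    fun k hk => (P.den_w_pos (by lia) (by lia)).ne'
  have hseed : branch lam (-(den h w (1 : ℕ) / den h w (0 : ℕ))) = orbit lam w 3 := by
    rw [Nat.cast_one, Nat.cast_zero, den_one, den_zero, orbit, branch, div_one, neg_div_neg_eq]
  rw [Function.iterate_succ_apply, hseed, ← orbit_four_mul_add] at hiter
  push_cast at hiter
  rw [hiter, add_assoc, one_add_one_eq_two, den_middle_succ, den_middle P.lam_eq,
    mul_div_mul_left _ _ hB, ← neg_div, neg_sub]

lemma orbit_le_orbit_succ_of_lt_four {i : ℕ} (hi : i < 4) :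
    orbit lam w i ≤ orbit lam w (i + 1) := by
  have hw := P.w_pos
  have hw1 := sub_pos.2 P.w_lt_one
  have hlw := sub_pos.2 P.w_lt_lam
  have ha := P.w_sub_lam_add_one_pos
  have hquad := P.w_quad
  have hhalf := P.half_lam_le
  interval_cases i <;> simp only [orbit, branch, sub_le_sub_iff_right]
  · rw [le_div_iff₀ ha]; linarith
  · rw [div_le_div_iff₀ ha hw1]; nlinarith
  · rw [div_le_div_iff₀ hw1 hw]; linarith
  · rw [neg_div, ← div_neg, neg_sub]
    exact one_div_le_one_div_of_le hlw (by linarith)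

lemma orbit_block {n : ℕ} (hn : n ≤ h) :
    ∀ i < 4, orbit lam w (4 * n + i) ≤ orbit lam w (4 * n + i + 1) := by
  induction n with
  | zero => simpa using fun i hi => P.orbit_le_orbit_succ_of_lt_four hi
  | succ n ih =>
    intro i hi
    have ih := ih (by lia)
    have hneg : orbit lam w (4 * n + i + 1) < 0 := by
      have hlast := P.orbit_four_mul_neg hn
      have h1 := ih 1 (by lia)
      have h2 := ih 2 (by lia)
      have h3 := ih 3 (by lia)
      rw [mul_add_one] at hlast
      interval_cases i <;> linarith
    rw [show 4 * (n + 1) + i = 4 * n + i + 4 by ring]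
    exact branch_le_branch hneg (ih i hi)

lemma monotoneOn_orbit : MonotoneOn (orbit lam w) (Iic (4 * h + 4)) := by
  refine monotoneOn_of_le_succ ordConnected_Iic fun k _ _ hk => ?_
  have hk : k + 1 ≤ 4 * h + 4 := hk
  have := P.orbit_block (n := k / 4) (by lia) (k % 4) (Nat.mod_lt _ (by norm_num))
  rwa [Nat.div_add_mod] at this

lemma orbit_neg {k : ℕ} (hk : k ≤ 4 * h) : orbit lam w k < 0 :=
  (P.monotoneOn_orbit (mem_Iic.2 (by lia)) (mem_Iic.2 (by lia)) hk).trans_lt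
    (P.orbit_four_mul_neg le_rfl)

lemma sub_le_orbit {k : ℕ} (hk : k ≤ 4 * h + 4) : w - lam ≤ orbit lam w k :=
  P.monotoneOn_orbit (mem_Iic.2 (Nat.zero_le _)) (mem_Iic.2 hk) k.zero_le

lemma orbit_last_lt : orbit lam w (4 * h + 2) < w := by
  have hB := B_pos h (n := h + 1) (by lia) (by lia)
  have hw1 := sub_pos.2 P.w_lt_one
  set κ := (w - lam + 1) / (1 - w)
  have hseq := isRosenSeq_den P.lam_eq (lam - κ)
  have hseed : -(den h (lam - κ) (1 : ℕ) / den h (lam - κ) (0 : ℕ)) = orbit lam w 2 := by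
    rw [Nat.cast_one, Nat.cast_zero, den_one, den_zero, orbit]
    ring
  have hpos := hseq.pos_of_iterate_branch_neg (n := h) (by simp [den_zero]) fun k hk => by
    rw [hseed, ← orbit_four_mul_add]
    exact P.orbit_neg (by lia)
  have hiter := hseq.iterate_branch (n := h) fun k hk => (hpos (k + 1) hk).ne'
  have hposh := hpos h le_rfl
  rw [den_middle_pred P.lam_eq, mul_pos_iff_of_pos_left hB] at hposh
  rw [hseed, ← orbit_four_mul_add, Nat.cast_succ, den_middle P.lam_eq, den_middle_pred P.lam_eq,
    mul_div_mul_left _ _ hB.ne', ← neg_div] at hiter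
  rw [hiter, div_lt_iff₀ hposh]
  have hκw : κ * (1 - w) = w - lam + 1 := div_mul_cancel₀ _ hw1.ne'
  have hquad := P.w_quad
  have := P.one_lt_lam
  refine lt_of_mul_lt_mul_right ?_ hw1.le
  -- Cleared of denominators, the claim is `w ^ 2 + (2 - λ) w < 1`, that is, `w < ρ`.
  have hlhs : -(lam - κ - lam + 1) * (1 - w) = 2 * w - lam := by linear_combination hκw
  have hrhs : w * ((lam - 1) * (lam - κ) - lam ^ 2 + lam + 1) * (1 - w)
      = 2 * w - lam + lam * (1 - (w ^ 2 + (2 - lam) * w)) := by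
    linear_combination -w * (lam - 1) * hκw
  rw [hlhs, hrhs]
  nlinarith

end Admissible

end Orbit

section Height

/-- The heights `H_{k+1}` of the rectangles of `Ω_α`, generated from the first four like `orbit`. -/
noncomputable def height (lam ρ : ℝ) : ℕ → ℝ
  | 0 => 1 / (2 + ρ)
  | 1 => 1 / (lam + 1)
  | 2 => 1 / (lam + ρ)
  | 3 => 1 / lam
  | k + 4 => fibre lam (height lam ρ k)

variable {h : ℕ} {lam ρ w : ℝ}

lemma height_four_mul_add (lam ρ : ℝ) (n i : ℕ) :
    height lam ρ (4 * n + i) = (fibre lam)^[n] (height lam ρ i) :=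
  apply_four_mul_add (x := height lam ρ) (fun _ => rfl) n i

lemma fibre_le_fibre {a b : ℝ} (hab : a ≤ b) (hb : b < lam) : fibre lam a ≤ fibre lam b :=
  one_div_le_one_div_of_le (sub_pos.2 hb) (by linarith)

namespace Admissible

variable (P : Admissible h lam ρ w)
include P

lemma height_four_mul {n : ℕ} (hn : n ≤ h) :
    height lam ρ (4 * n) = den h (lam - ρ) (h - n + 1) / den h (lam - ρ) (h - n) := by
  have hB := (B_pos h (n := h + 1) (by lia) (by lia)).ne'
  have hiter := (isRosenSeq_den_sub P.lam_eq (lam - ρ) (h + 1)).iterate_fibre (n := n)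
    fun k hk => (den_pos P.lam_eq (by linarith [P.rho_lt_one]) (by lia) (by lia)).ne'
  have hden : lam - ρ - lam + 1 ≠ 0 := by linarith [P.rho_lt_one]
  have hfactor : (lam - 1) * (lam - ρ) - lam ^ 2 + lam + 1 = (lam - ρ - lam + 1) * (2 + ρ) := by
    linear_combination P.rho_quad
  have hseed : den h (lam - ρ) (h + 1 - (0 : ℕ)) / den h (lam - ρ) (h + 1 - (1 : ℕ))
      = height lam ρ 0 := by
    rw [Nat.cast_zero, Nat.cast_one, sub_zero, add_sub_cancel_right, den_middle P.lam_eq,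
      den_middle_pred P.lam_eq, mul_div_mul_left _ _ hB, hfactor,
      div_mul_cancel_left₀ hden, height, one_div]
  rw [hseed, ← height_four_mul_add] at hiter
  push_cast at hiter
  rwa [add_sub_add_right_eq_sub, add_sub_right_comm] at hiter

lemma height_four_mul_add_one {n : ℕ} (hn : n ≤ h) :
    height lam ρ (4 * n + 1) = (B h n + B h (n + 1)) / (B h (n + 1) + B h (n + 2)) := by
  have hiter := (isRosenSeq_den P.lam_eq (lam + 1)).iterate_fibre (n := n)
    fun k hk => (den_pos P.lam_eq (by linarith) (by lia) (by lia)).ne'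
  rw [Nat.cast_zero, Nat.cast_one, den_zero, den_one, ← height, ← height_four_mul_add,
    den_lam_add_one P.lam_eq, den_lam_add_one P.lam_eq] at hiter
  push_cast at hiter
  rwa [add_assoc (n : ℤ), one_add_one_eq_two] at hiter

lemma height_four_mul_add_two {n : ℕ} (hn : n ≤ h) :
    height lam ρ (4 * n + 2) = den h ρ (h - n + 1) / den h ρ (h - n) := by
  have hB := (B_pos h (n := h + 1) (by lia) (by lia)).ne'
  have hiter := (isRosenSeq_den_sub P.lam_eq ρ (h + 1)).iterate_fibre (n := n)
    fun k hk => (den_pos P.lam_eq (by linarith [P.rho_sub_lam_add_one_pos]) (by lia) (by lia)).ne'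
  have hden : ρ - lam + 1 ≠ 0 := P.rho_sub_lam_add_one_pos.ne'
  have hfactor : (lam - 1) * ρ - lam ^ 2 + lam + 1 = (ρ - lam + 1) * (lam + ρ) := by
    linear_combination -P.rho_quad
  have hseed : den h ρ (h + 1 - (0 : ℕ)) / den h ρ (h + 1 - (1 : ℕ)) = height lam ρ 2 := by
    rw [Nat.cast_zero, Nat.cast_one, sub_zero, add_sub_cancel_right, den_middle P.lam_eq,
      den_middle_pred P.lam_eq, mul_div_mul_left _ _ hB, hfactor,
      div_mul_cancel_left₀ hden, height, one_div]
  rw [hseed, ← height_four_mul_add] at hiter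
  push_cast at hiter
  rwa [add_sub_add_right_eq_sub, add_sub_right_comm] at hiter

lemma height_four_mul_add_three {n : ℕ} (hn : n ≤ h) :
    height lam ρ (4 * n + 3) = B h (n + 1) / B h (n + 2) := by
  have hiter := (isRosenSeq_den P.lam_eq lam).iterate_fibre (n := n)
    fun k hk => (den_pos P.lam_eq (by linarith) (by lia) (by lia)).ne'
  rw [Nat.cast_zero, Nat.cast_one, den_zero, den_one, ← height, ← height_four_mul_add,
    den_lam P.lam_eq, den_lam P.lam_eq] at hiter
  push_cast at hiter
  rwa [add_assoc (n : ℤ), one_add_one_eq_two] at hiter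

lemma height_top : height lam ρ (4 * h + 3) = 1 := by
  rw [P.height_four_mul_add_three le_rfl, B_middle_succ]
  exact div_self (B_pos h (by lia) (by lia)).ne'

lemma height_last : height lam ρ (4 * h + 2) = ρ := by
  rw [P.height_four_mul_add_two le_rfl, sub_self, zero_add, den_one, den_zero, div_one]

lemma height_seed_mem {i : ℕ} (hi : i < 4) :
    0 ≤ height lam ρ i ∧ height lam ρ i ≤ height lam ρ 3 := by
  have := P.rho_pos
  have := P.one_lt_lam
  have := P.lam_lt_two
  interval_cases i <;> refine ⟨by unfold height; positivity, ?_⟩ <;> simp only [height, le_refl]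
  all_goals exact one_div_le_one_div_of_le (by linarith) (by linarith)

lemma height_four_mul_add_three_le_one {n : ℕ} (hn : n ≤ h) : height lam ρ (4 * n + 3) ≤ 1 := by
  rw [P.height_four_mul_add_three hn]
  refine div_le_one_of_le₀ ?_ (B_pos h (by lia) (by lia)).le
  simpa [add_assoc, one_add_one_eq_two] using B_le_B_add_one h (n := n + 1) (by lia) (by lia)

lemma height_block {n i : ℕ} (hn : n ≤ h) (hi : i < 4) :
    0 ≤ height lam ρ (4 * n + i) ∧ height lam ρ (4 * n + i) ≤ height lam ρ (4 * n + 3) := by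
  induction n with
  | zero => simpa using P.height_seed_mem hi
  | succ n ih =>
    have hle := (ih (by lia)).2
    have hlt : height lam ρ (4 * n + 3) < lam :=
      (P.height_four_mul_add_three_le_one (by lia)).trans_lt P.one_lt_lam
    simp only [show 4 * (n + 1) + i = 4 * n + i + 4 by ring,
      show 4 * (n + 1) + 3 = 4 * n + 3 + 4 by ring, height]
    exact ⟨one_div_nonneg.2 (sub_nonneg.2 (hle.trans hlt.le)), fibre_le_fibre hle hlt⟩

lemma height_mem_Icc {k : ℕ} (hk : k < 4 * h + 4) : height lam ρ k ∈ Icc 0 1 := by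
  have hk4 : k / 4 ≤ h := by lia
  have := P.height_block hk4 (Nat.mod_lt k (by norm_num))
  rw [Nat.div_add_mod] at this
  exact ⟨this.1, this.2.trans (P.height_four_mul_add_three_le_one hk4)⟩

end Admissible

end Height

section TotalMass

variable {h : ℕ} {lam ρ w : ℝ}

/-- The breakpoints of `Ω_α`: the interlaced orbits up to `ℓ_{2h+1}`, closed off by `r_0 = w`. -/
noncomputable def breakpoint (h : ℕ) (lam w : ℝ) (k : ℕ) : ℝ :=
  if k ≤ 4 * h + 2 then orbit lam w k else w

/-- The mass of the `k`-th rectangle if the interlacing of the orbits went on forever, that is, of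
`[orbit k, orbit (k + 1)) × [0, height k]`. -/
noncomputable def cellMass (lam ρ w : ℝ) (k : ℕ) : ℝ :=
  mass (orbit lam w k) (orbit lam w (k + 1)) (height lam ρ k)

lemma breakpoint_of_le {k : ℕ} (hk : k ≤ 4 * h + 2) : breakpoint h lam w k = orbit lam w k :=
  if_pos hk

lemma breakpoint_last : breakpoint h lam w (4 * h + 3) = w := if_neg (by lia)

namespace Admissible

variable (P : Admissible h lam ρ w)
include P

lemma monotone_breakpoint : Monotone (breakpoint h lam w) := by
  refine monotone_nat_of_le_succ fun k => ?_
  rcases lt_trichotomy k (4 * h + 2) with hk | rfl | hk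
  · rw [breakpoint_of_le hk.le, breakpoint_of_le hk]
    exact P.monotoneOn_orbit (mem_Iic.2 (by lia)) (mem_Iic.2 (by lia)) k.le_succ
  · rw [breakpoint_of_le le_rfl, breakpoint_last]
    exact P.orbit_last_lt.le
  · rw [breakpoint, breakpoint, if_neg hk.not_ge, if_neg (by lia)]

lemma one_add_orbit_mul_height_pos {j k : ℕ} (hj : j ≤ 4 * h + 4) (hk : k < 4 * h + 4) :
    0 < 1 + orbit lam w j * height lam ρ k := by
  obtain ⟨h0, h1⟩ := P.height_mem_Icc hk
  exact one_add_mul_pos (by linarith [P.w_sub_lam_add_one_pos]) (P.sub_le_orbit hj) h0 h1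

lemma integral_staircase_breakpoint :
    ∫ z in staircase (breakpoint h lam w) (height lam ρ) (4 * h + 3), 1 / (1 + z.1 * z.2) ^ 2
      = ∑ k ∈ Finset.range (4 * h + 2), cellMass lam ρ w k
        + mass (orbit lam w (4 * h + 2)) w ρ := by
  rw [integral_staircase P.monotone_breakpoint, Finset.sum_range_succ,
    breakpoint_of_le le_rfl, breakpoint_last, P.height_last]
  · congr 1
    refine Finset.sum_congr rfl fun k hk => ?_
    rw [Finset.mem_range] at hk
    rw [breakpoint_of_le hk.le, breakpoint_of_le hk, cellMass]
  · exact fun k hk => (P.height_mem_Icc (by lia)).1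
  · intro k hk
    rw [breakpoint_of_le (by lia)]
    exact P.one_add_orbit_mul_height_pos (by lia) (by lia)

lemma cellMass_add_four {k : ℕ} (hk : k < 4 * h) :
    cellMass lam ρ w (k + 4)
      = cellMass lam ρ w k + Real.log (-orbit lam w k) - Real.log (-orbit lam w (k + 1)) :=
  mass_branch_fibre (P.orbit_neg hk.le) (P.orbit_neg hk)
    ((P.height_mem_Icc (by lia)).2.trans_lt P.one_lt_lam)
    (P.one_add_orbit_mul_height_pos (by lia) (by lia))
    (P.one_add_orbit_mul_height_pos (by lia) (by lia))

lemma sum_cellMass_first_block :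
    cellMass lam ρ w 0 + cellMass lam ρ w 1 + cellMass lam ρ w 2 + cellMass lam ρ w 3
      = -Real.log (-orbit lam w 0) := by
  have hquad := P.rho_quad
  have hlam := P.one_lt_lam
  have hw := P.w_pos
  have ha := P.w_sub_lam_add_one_pos
  have hb := sub_pos.2 P.w_lt_one
  have hd := sub_pos.2 P.w_lt_lam
  have hu := P.rho_sub_lam_add_one_pos
  have hpos {i : ℕ} (hi : i < 4) {s : ℝ} (hs : 1 ≤ s) : 0 < orbit lam w i + s := by
    linarith [P.sub_le_orbit (k := i) (by lia)]
  have h0 : cellMass lam ρ w 0 = Real.log ((ρ - lam + 1) / (w - lam + 1)) := by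
    refine mass_one_div (by linarith [P.rho_pos]) (hpos (by lia) (by linarith [P.rho_pos]))
      (by positivity) ?_
    simp only [orbit]
    field_simp
    linear_combination -hquad
  have h1 : cellMass lam ρ w 1 = Real.log ((w - lam + 1) / (1 - w)) := by
    refine mass_one_div (by linarith) (hpos (by lia) (by linarith)) (by positivity) ?_
    simp only [orbit]
    field_simp
    ring
  have h2 : cellMass lam ρ w 2 = Real.log ((1 - w) / (w * (ρ - lam + 1))) := by
    refine mass_one_div (by linarith [P.rho_pos]) (hpos (by lia) (by linarith [P.rho_pos]))
      (by positivity) ?_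
    simp only [orbit]
    field_simp
    linear_combination w * hquad
  have h3 : cellMass lam ρ w 3 = Real.log (w / (lam - w)) := by
    refine mass_one_div (by linarith) (hpos (by lia) hlam.le) (by positivity) ?_
    simp only [orbit, branch, neg_div, ← div_neg, neg_sub]
    field_simp
    ring
  rw [h0, h1, h2, h3, orbit, neg_sub, Real.log_div hu.ne' ha.ne', Real.log_div ha.ne' hb.ne',
    Real.log_div hb.ne' (mul_pos hw hu).ne', Real.log_mul hw.ne' hu.ne', Real.log_div hw.ne' hd.ne']
  ring

lemma sum_cellMass_block {n : ℕ} (hn : n ≤ h) :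
    cellMass lam ρ w (4 * n) + cellMass lam ρ w (4 * n + 1) + cellMass lam ρ w (4 * n + 2)
      + cellMass lam ρ w (4 * n + 3) = -Real.log (-orbit lam w (4 * n)) := by
  induction n with
  | zero => exact P.sum_cellMass_first_block
  | succ n ih =>
    have ih := ih (by lia)
    have hstep (i : ℕ) (hi : i < 4) : cellMass lam ρ w (4 * (n + 1) + i)
        = cellMass lam ρ w (4 * n + i) + Real.log (-orbit lam w (4 * n + i))
          - Real.log (-orbit lam w (4 * n + (i + 1))) := by
      rw [show 4 * (n + 1) + i = 4 * n + i + 4 by ring]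
      exact P.cellMass_add_four (by lia)
    have h0 := hstep 0 (by lia)
    have h1 := hstep 1 (by lia)
    have h2 := hstep 2 (by lia)
    have h3 := hstep 3 (by lia)
    rw [← mul_add_one] at h3
    simp only [add_zero] at h0
    linarith

lemma sum_cellMass {n : ℕ} (hn : n ≤ h + 1) :
    ∑ k ∈ Finset.range (4 * n), cellMass lam ρ w k = -Real.log (den h (lam - w) n) := by
  induction n with
  | zero => simp [den_zero]
  | succ n ih =>
    have hblock := P.sum_cellMass_block (n := n) (by lia)
    rw [P.orbit_four_mul (by lia), neg_neg, Real.log_div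
      (P.den_lam_sub_w_pos (by lia) (by lia)).ne' (P.den_lam_sub_w_pos (by lia) (by lia)).ne']
      at hblock
    rw [mul_add_one, Finset.sum_range_succ, Finset.sum_range_succ, Finset.sum_range_succ,
      Finset.sum_range_succ, ih (by lia)]
    push_cast
    linarith

lemma cellMass_last : cellMass lam ρ w (4 * h + 2)
    = mass (orbit lam w (4 * h + 2)) w ρ + Real.log (ρ - lam + 1) - Real.log (w - lam + 1) := by
  have hρ := P.rho_pos
  have hw := P.w_pos
  have ha := P.w_sub_lam_add_one_pos
  have hu := P.rho_sub_lam_add_one_pos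
  have hcorner : 1 + (1 - w) / (w - lam + 1) * ρ
      = (1 + w * ρ) * (ρ - lam + 1) / (w - lam + 1) := by
    field_simp
    linear_combination -w * P.rho_quad
  rw [cellMass, mass, mass, P.height_last, P.orbit_below_top, hcorner,
    Real.log_div (by positivity) ha.ne', Real.log_mul (by positivity) hu.ne']
  ring

lemma cellMass_top :
    cellMass lam ρ w (4 * h + 3) = Real.log (w - lam + 1) - Real.log (1 - w) := by
  have ha := P.w_sub_lam_add_one_pos
  have hb := sub_pos.2 P.w_lt_one
  have hswap : (w - lam + 1) / (1 - w) + 1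
      = (w - lam + 1) / (1 - w) * ((1 - w) / (w - lam + 1) + 1) := by
    field_simp
    ring
  have hmass := mass_one_div one_pos (by positivity) (by positivity) hswap
  rw [one_div_one, Real.log_div ha.ne' hb.ne'] at hmass
  rw [cellMass, P.height_top, P.orbit_below_top, P.orbit_top, hmass]

lemma neg_log_B_mul : -Real.log (B h (h + 1) * (ρ - lam + 1))
    = Real.log ((1 + ρ) / (2 * Real.sin (angle h / 2))) := by
  have hsin := sin_half_angle_pos h
  have hu := P.rho_sub_lam_add_one_pos.ne'
  have hsq := two_sub_two_mul_cos h
  rw [← P.lam_eq] at hsq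
  rw [← Real.log_inv, B_middle]
  congr 1
  field_simp
  linear_combination -P.rho_quad - hsq

lemma sum_cellMass_add_mass : ∑ k ∈ Finset.range (4 * h + 2), cellMass lam ρ w k
      + mass (orbit lam w (4 * h + 2)) w ρ
    = Real.log ((1 + ρ) / (2 * Real.sin (angle h / 2))) := by
  have hB := (B_pos h (n := h + 1) (by lia) (by lia)).ne'
  have hu := P.rho_sub_lam_add_one_pos.ne'
  have hb := (sub_pos.2 P.w_lt_one).ne'
  have hsum := P.sum_cellMass (n := h + 1) le_rfl
  rw [mul_add_one, Finset.sum_range_succ, Finset.sum_range_succ, P.cellMass_last, P.cellMass_top,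
    Nat.cast_succ, den_middle P.lam_eq, show lam - w - lam + 1 = 1 - w by ring,
    Real.log_mul hB hb] at hsum
  rw [← P.neg_log_B_mul, Real.log_mul hB hu]
  linarith

lemma integral_staircase_breakpoint_eq_log :
    ∫ z in staircase (breakpoint h lam w) (height lam ρ) (4 * h + 3), 1 / (1 + z.1 * z.2) ^ 2
      = Real.log ((1 + ρ) / (2 * Real.sin (angle h / 2))) :=
  P.integral_staircase_breakpoint.trans P.sum_cellMass_add_mass

end Admissible

end TotalMass

section Dynamics

variable {h : ℕ} {lam ρ α : ℝ}

lemma Tmap_neg (lam α x : ℝ) : Tmap lam α (-x) = Tmap lam α x := by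
  simp [Tmap, dfun, abs_inv, abs_mul]

lemma Tmap_eq_of_neg {x : ℝ} {d : ℤ} (hlam : 0 < lam) (hx : x < 0)
    (hmem : -1 / x - d * lam ∈ Ico ((α - 1) * lam) (α * lam)) :
    Tmap lam α x = -1 / x - d * lam := by
  obtain ⟨hle, hlt⟩ := hmem
  have habs : |1 / x| = -1 / x := by rw [abs_of_neg (one_div_neg.2 hx), neg_div]
  have hquot : |1 / (x * lam)| = -1 / x / lam := by
    rw [← div_div, abs_div, habs, abs_of_pos hlam]
  have hdigit : dfun lam α x = d := by
    rw [dfun, hquot, Int.floor_eq_iff, add_sub_assoc]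
    constructor
    · rw [← sub_le_iff_le_add, le_div_iff₀ hlam]
      linarith
    · rw [← lt_sub_iff_add_lt, div_lt_iff₀ hlam]
      linarith
  rw [Tmap, if_neg hx.ne, habs, hdigit, mul_comm]

lemma Tmap_eq_branch {x : ℝ} (hlam : 0 < lam) (hx : x < 0)
    (hmem : branch lam x ∈ Ico ((α - 1) * lam) (α * lam)) : Tmap lam α x = branch lam x := by
  have := Tmap_eq_of_neg (α := α) (d := 1) hlam hx
  rw [Int.cast_one, one_mul] at this
  exact this hmem

lemma Tmap_eq_branch_sub {x : ℝ} (hlam : 0 < lam) (hx : x < 0)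
    (hmem : branch lam x - lam ∈ Ico ((α - 1) * lam) (α * lam)) :
    Tmap lam α x = branch lam x - lam := by
  have := Tmap_eq_of_neg (α := α) (d := 2) hlam hx
  rw [Int.cast_two, two_mul, ← sub_sub] at this
  exact this hmem

namespace Admissible

variable (P : Admissible h lam ρ (α * lam))
include P

lemma lam_pos : 0 < lam := one_pos.trans P.one_lt_lam

lemma orbit_mem_Ico {k : ℕ} (hk : k ≤ 4 * h + 2) :
    orbit lam (α * lam) k ∈ Ico ((α - 1) * lam) (α * lam) := by
  refine ⟨?_, ?_⟩
  · rw [sub_one_mul]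
    exact P.sub_le_orbit (by lia)
  · exact (P.monotoneOn_orbit (mem_Iic.2 (by lia)) (mem_Iic.2 (by lia)) hk).trans_lt
      P.orbit_last_lt

lemma Tmap_orbit {k : ℕ} (hk : k + 4 ≤ 4 * h + 2) :
    Tmap lam α (orbit lam (α * lam) k) = orbit lam (α * lam) (k + 4) :=
  Tmap_eq_branch P.lam_pos (P.orbit_neg (by lia)) (P.orbit_mem_Ico hk)

lemma Tmap_right : Tmap lam α (α * lam) = orbit lam (α * lam) 3 := by
  have hbranch : branch lam (-(α * lam)) = orbit lam (α * lam) 3 := by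
    rw [branch, neg_div_neg_eq, orbit]
  have hmem := P.orbit_mem_Ico (k := 3) (by linarith [P.one_le])
  rw [← hbranch] at hmem
  rw [← Tmap_neg, Tmap_eq_branch P.lam_pos (neg_lt_zero.2 P.w_pos) hmem, hbranch]

lemma Tmap_orbit_four_mul :
    Tmap lam α (orbit lam (α * lam) (4 * h)) = orbit lam (α * lam) 2 := by
  have hbranch : branch lam (orbit lam (α * lam) (4 * h)) - lam = orbit lam (α * lam) 2 := by
    rw [← orbit_add_four, P.orbit_top, orbit]
  have hmem := P.orbit_mem_Ico (k := 2) (by lia)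
  rw [← hbranch] at hmem ⊢
  exact Tmap_eq_branch_sub P.lam_pos (P.orbit_neg le_rfl) hmem

lemma Tmap_orbit_of_succ_eq {k : ℕ} (hk : k + 1 = 4 * h) :
    Tmap lam α (orbit lam (α * lam) k) = orbit lam (α * lam) 1 := by
  have hbranch : branch lam (orbit lam (α * lam) k) - lam = orbit lam (α * lam) 1 := by
    rw [← orbit_add_four, show k + 4 = 4 * h + 3 by lia, P.orbit_below_top, orbit]
  have hmem := P.orbit_mem_Ico (k := 1) (by lia)
  rw [← hbranch] at hmem ⊢
  exact Tmap_eq_branch_sub P.lam_pos (P.orbit_neg (by lia)) hmem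

lemma iterate_Tmap_orbit {n i : ℕ} (hn : 4 * n + i ≤ 4 * h + 2) :
    (Tmap lam α)^[n] (orbit lam (α * lam) i) = orbit lam (α * lam) (4 * n + i) := by
  induction n with
  | zero => simp
  | succ n ih =>
    rw [Function.iterate_succ_apply', ih (by lia), P.Tmap_orbit (by lia)]
    congr 1
    ring

lemma iterate_left {n : ℕ} (hn : n ≤ h) :
    (Tmap lam α)^[n] ((α - 1) * lam) = orbit lam (α * lam) (4 * n) := by
  rw [sub_one_mul, ← orbit, P.iterate_Tmap_orbit (by lia), add_zero]

lemma iterate_left_add {n : ℕ} (hn : n ≤ h) :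
    (Tmap lam α)^[h + (n + 1)] ((α - 1) * lam) = orbit lam (α * lam) (4 * n + 2) := by
  rw [← add_assoc, add_right_comm, add_comm, Function.iterate_add_apply,
    Function.iterate_succ_apply', P.iterate_left le_rfl, P.Tmap_orbit_four_mul,
    P.iterate_Tmap_orbit (by lia)]

lemma iterate_right {n : ℕ} (hn : n < h) :
    (Tmap lam α)^[n + 1] (α * lam) = orbit lam (α * lam) (4 * n + 3) := by
  rw [Function.iterate_succ_apply, P.Tmap_right, P.iterate_Tmap_orbit (by lia)]

lemma iterate_right_add {n : ℕ} (hn : n ≤ h) :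
    (Tmap lam α)^[h + (n + 1)] (α * lam) = orbit lam (α * lam) (4 * n + 1) := by
  obtain ⟨m, rfl⟩ : ∃ m, h = m + 1 := Nat.exists_eq_succ_of_ne_zero (by linarith [P.one_le])
  rw [← add_assoc, add_right_comm, add_comm, Function.iterate_add_apply,
    Function.iterate_succ_apply', P.iterate_right m.lt_succ_self, P.Tmap_orbit_of_succ_eq (by lia),
    P.iterate_Tmap_orbit (by lia)]

end Admissible

end Dynamics

section Region

variable {h : ℕ} {lam ρ α : ℝ} {ℓ r H : ℕ → ℝ}

/-- The region `Ω_α`, as a function of the endpoint orbits `ℓ`, `r` and the heights `H`. -/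
def region (h : ℕ) (ℓ r H : ℕ → ℝ) : Set (ℝ × ℝ) :=
  (⋃ n ∈ Finset.Icc 1 h, Ico (ℓ (n - 1)) (r (h + n)) ×ˢ Icc (0 : ℝ) (H (4 * n - 3)))
    ∪ (⋃ n ∈ Finset.Icc 1 h, Ico (r (h + n)) (ℓ (h + n)) ×ˢ Icc (0 : ℝ) (H (4 * n - 2)))
    ∪ (⋃ n ∈ Finset.Icc 1 h, Ico (ℓ (h + n)) (r n) ×ˢ Icc (0 : ℝ) (H (4 * n - 1)))
    ∪ (⋃ n ∈ Finset.Icc 1 h, Ico (r n) (ℓ n) ×ˢ Icc (0 : ℝ) (H (4 * n)))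
    ∪ Ico (ℓ h) (r (2 * h + 1)) ×ˢ Icc (0 : ℝ) (H (4 * h + 1))
    ∪ Ico (r (2 * h + 1)) (ℓ (2 * h + 1)) ×ˢ Icc (0 : ℝ) (H (4 * h + 2))
    ∪ Ico (ℓ (2 * h + 1)) (r 0) ×ˢ Icc (0 : ℝ) (H (4 * h + 3))

lemma biUnion_range_four_mul_add_three {β : Type*} {S U₁ U₂ U₃ U₄ : ℕ → Set β} {V₁ V₂ V₃ : Set β}
    (hU₁ : ∀ n < h, S (4 * n) = U₁ (n + 1)) (hU₂ : ∀ n < h, S (4 * n + 1) = U₂ (n + 1))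
    (hU₃ : ∀ n < h, S (4 * n + 2) = U₃ (n + 1)) (hU₄ : ∀ n < h, S (4 * n + 3) = U₄ (n + 1))
    (hV₁ : S (4 * h) = V₁) (hV₂ : S (4 * h + 1) = V₂) (hV₃ : S (4 * h + 2) = V₃) :
    ⋃ k ∈ Finset.range (4 * h + 3), S k
      = (⋃ n ∈ Finset.Icc 1 h, U₁ n) ∪ (⋃ n ∈ Finset.Icc 1 h, U₂ n)
        ∪ (⋃ n ∈ Finset.Icc 1 h, U₃ n) ∪ (⋃ n ∈ Finset.Icc 1 h, U₄ n) ∪ V₁ ∪ V₂ ∪ V₃ := by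
  have hblocks : ⋃ k ∈ Finset.range (4 * h), S k
      = (⋃ n ∈ Finset.Icc 1 h, U₁ n) ∪ (⋃ n ∈ Finset.Icc 1 h, U₂ n)
        ∪ (⋃ n ∈ Finset.Icc 1 h, U₃ n) ∪ (⋃ n ∈ Finset.Icc 1 h, U₄ n) := by
    clear hV₁ hV₂ hV₃
    induction h with
    | zero => simp
    | succ h ih =>
      have ih := ih (fun n hn => hU₁ n (by lia)) (fun n hn => hU₂ n (by lia))
        (fun n hn => hU₃ n (by lia)) (fun n hn => hU₄ n (by lia))
      simp only [← Finset.insert_Icc_right_eq_Icc_add_one (Nat.le_add_left 1 h), mul_add_one,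
        Finset.range_add_one, Finset.set_biUnion_insert, ih, hU₁ h h.lt_succ_self,
        hU₂ h h.lt_succ_self, hU₃ h h.lt_succ_self, hU₄ h h.lt_succ_self]
      ac_rfl
  simp only [Finset.range_add_one, Finset.set_biUnion_insert, hblocks, hV₁, hV₂, hV₃]
  ac_rfl

lemma staircase_eq_region {c y : ℕ → ℝ} (hℓ : ∀ n ≤ h, ℓ n = c (4 * n))
    (hr_add : ∀ n ≤ h, r (h + (n + 1)) = c (4 * n + 1))
    (hℓ_add : ∀ n ≤ h, ℓ (h + (n + 1)) = c (4 * n + 2))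
    (hr : ∀ n < h, r (n + 1) = c (4 * n + 3)) (hr0 : r 0 = c (4 * h + 3))
    (hH : ∀ k < 4 * h + 3, H (k + 1) = y k) :
    staircase c y (4 * h + 3) = region h ℓ r H := by
  refine biUnion_range_four_mul_add_three (fun n hn => ?_) (fun n hn => ?_) (fun n hn => ?_)
    (fun n hn => ?_) ?_ ?_ ?_
  · rw [← hℓ n hn.le, ← hr_add n hn.le, ← hH (4 * n) (by lia), Nat.add_sub_cancel]
    rfl
  · rw [← hr_add n hn.le, ← hℓ_add n hn.le, ← hH (4 * n + 1) (by lia)]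
    rfl
  · rw [← hℓ_add n hn.le, ← hr n hn, ← hH (4 * n + 2) (by lia)]
    rfl
  · rw [← hr n hn, hℓ (n + 1) hn, ← hH (4 * n + 3) (by lia)]
    rfl
  · rw [← hℓ h le_rfl, ← hr_add h le_rfl, ← hH (4 * h) (by lia), two_mul, add_assoc]
  · rw [← hr_add h le_rfl, ← hℓ_add h le_rfl, ← hH (4 * h + 1) (by lia), two_mul, add_assoc h]
  · rw [← hℓ_add h le_rfl, ← hr0, ← hH (4 * h + 2) (by lia), two_mul, add_assoc h]

namespace Admissible

lemma of_alpha (hh : 1 ≤ h) (hlam : lam = 2 * Real.cos (angle h))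
    (hρ : ρ = (lam - 2 + Real.sqrt (lam ^ 2 - 4 * lam + 8)) / 2) (hα1 : 1 / 2 ≤ α)
    (hα2 : α < ρ / lam) : Admissible h lam ρ (α * lam) := by
  have hlam_pos : 0 < lam := by linarith [cos_angle_pos h]
  have hsq := Real.sq_sqrt (show 0 ≤ lam ^ 2 - 4 * lam + 8 by nlinarith [sq_nonneg (lam - 2)])
  have hquad : ρ ^ 2 + (2 - lam) * ρ = 1 := by
    rw [hρ]
    linear_combination hsq / 4
  have hw : α * lam < ρ := (lt_div_iff₀ hlam_pos).1 hα2
  have hhalf : lam / 2 ≤ α * lam := by nlinarith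
  exact ⟨hh, hlam, (half_pos hlam_pos).trans (hhalf.trans_lt hw), hquad, hhalf, hw⟩

variable (P : Admissible h lam ρ (α * lam))
include P

lemma eq_height
    (hH4 : ∀ n : ℕ, 1 ≤ n → n ≤ h → H (4 * n) = B h n / B h ((n : ℤ) + 1))
    (hH4m2 : ∀ n : ℕ, 1 ≤ n → n ≤ h + 1 →
      H (4 * n - 2) = (B h ((n : ℤ) - 1) + B h n) / (B h n + B h ((n : ℤ) + 1)))
    (hH4h3 : ∀ n : ℕ, n ≤ h → H (4 * h + 3 - 4 * n)
      = (B h ((n : ℤ) + 1) * ρ - B h n) / (B h n * ρ - B h ((n : ℤ) - 1)))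
    (hH4h1 : ∀ n : ℕ, n ≤ h → H (4 * h + 1 - 4 * n)
      = (B h ((n : ℤ) + 1) * ρ - B h ((n : ℤ) + 2)) / (B h n * ρ - B h ((n : ℤ) + 1)))
    {k : ℕ} (hk : k < 4 * h + 3) : H (k + 1) = height lam ρ k := by
  obtain ⟨n, i, hi, rfl⟩ : ∃ n i, i < 4 ∧ 4 * n + i = k :=
    ⟨k / 4, k % 4, Nat.mod_lt _ (by norm_num), Nat.div_add_mod k 4⟩
  have hn : n ≤ h := by lia
  have hcast : ((h - n : ℕ) : ℤ) = h - n := Nat.cast_sub hn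
  interval_cases i
  · have hH := hH4h1 (h - n) (Nat.sub_le h n)
    rw [show 4 * h + 1 - 4 * (h - n) = 4 * n + 0 + 1 by lia, hcast, ← neg_div_neg_eq] at hH
    rw [hH, add_zero, P.height_four_mul hn, den_lam_sub P.lam_eq, den_lam_sub P.lam_eq]
    ring_nf
  · have hH := hH4m2 (n + 1) (by lia) (by lia)
    rw [show 4 * (n + 1) - 2 = 4 * n + 1 + 1 by lia] at hH
    rw [hH, P.height_four_mul_add_one hn]
    push_cast
    ring_nf
  · have hH := hH4h3 (h - n) (Nat.sub_le h n)
    rw [show 4 * h + 3 - 4 * (h - n) = 4 * n + 2 + 1 by lia, hcast] at hH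
    rw [hH, P.height_four_mul_add_two hn, den, den, add_sub_cancel_right, mul_comm ρ, mul_comm ρ]
  · have hH := hH4 (n + 1) (by lia) (by lia)
    rw [show 4 * (n + 1) = 4 * n + 3 + 1 by ring] at hH
    rw [hH, P.height_four_mul_add_three hn]
    push_cast
    ring_nf

lemma staircase_breakpoint_eq_region (hℓ : ∀ n, ℓ n = (Tmap lam α)^[n] ((α - 1) * lam))
    (hr : ∀ n, r n = (Tmap lam α)^[n] (α * lam))
    (hH : ∀ k < 4 * h + 3, H (k + 1) = height lam ρ k) :
    staircase (breakpoint h lam (α * lam)) (height lam ρ) (4 * h + 3) = region h ℓ r H := by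
  refine staircase_eq_region (fun n hn => ?_) (fun n hn => ?_) (fun n hn => ?_) (fun n hn => ?_)
    ?_ hH
  · rw [hℓ, P.iterate_left hn, breakpoint_of_le (by lia)]
  · rw [hr, P.iterate_right_add hn, breakpoint_of_le (by lia)]
  · rw [hℓ, P.iterate_left_add hn, breakpoint_of_le (by lia)]
  · rw [hr, P.iterate_right hn, breakpoint_of_le (by lia)]
  · rw [hr, breakpoint_last, Function.iterate_zero_apply]

end Admissible

lemma two_mul_sin_half_angle (h : ℕ) :
    2 * Real.sin (angle h / 2) = Real.sqrt (2 - 2 * Real.cos (angle h)) := by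
  rw [two_sub_two_mul_cos, Real.sqrt_sq (mul_pos two_pos (sin_half_angle_pos h)).le]

end Region

end Rosen

/-- Proposition 2.13: for odd `q = 2h+3` and `1/2 ≤ α < ρ/λ`, the integral of `(1+xy)⁻²`
over `Ω_α` equals `log((1+ρ)/√(2-λ)) = log((1+ρ)/(2 sin(π/(2q))))`, independent of `α`. -/
theorem stmt15 (h q : ℕ) (hh : 1 ≤ h) (hq : q = 2 * h + 3) (lam α ρ : ℝ)
    (hlam : lam = 2 * Real.cos (Real.pi / q))
    (hρ : ρ = (lam - 2 + Real.sqrt (lam ^ 2 - 4 * lam + 8)) / 2)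
    (hα1 : 1 / 2 ≤ α) (hα2 : α < ρ / lam)
    (B : ℤ → ℝ)
    (hB : ∀ n : ℤ, B n = Real.sin (n * Real.pi / q) / Real.sin (Real.pi / q))
    (ℓ r : ℕ → ℝ)
    (hℓ : ∀ n, ℓ n = (Tmap lam α)^[n] ((α - 1) * lam))
    (hr : ∀ n, r n = (Tmap lam α)^[n] (α * lam))
    (H : ℕ → ℝ)
    (hH4 : ∀ n : ℕ, 1 ≤ n → n ≤ h → H (4 * n) = B n / B ((n : ℤ) + 1))
    (hH4m2 : ∀ n : ℕ, 1 ≤ n → n ≤ h + 1 →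
      H (4 * n - 2) = (B ((n : ℤ) - 1) + B n) / (B n + B ((n : ℤ) + 1)))
    (hH4h3 : ∀ n : ℕ, n ≤ h →
      H (4 * h + 3 - 4 * n) = (B ((n : ℤ) + 1) * ρ - B n) / (B n * ρ - B ((n : ℤ) - 1)))
    (hH4h1 : ∀ n : ℕ, n ≤ h →
      H (4 * h + 1 - 4 * n) = (B ((n : ℤ) + 1) * ρ - B ((n : ℤ) + 2)) / (B n * ρ - B ((n : ℤ) + 1)))
    (Ω : Set (ℝ × ℝ))
    (hΩ : Ω = (⋃ n ∈ Finset.Icc 1 h, Ico (ℓ (n - 1)) (r (h + n)) ×ˢ Icc (0 : ℝ) (H (4 * n - 3)))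
      ∪ (⋃ n ∈ Finset.Icc 1 h, Ico (r (h + n)) (ℓ (h + n)) ×ˢ Icc (0 : ℝ) (H (4 * n - 2)))
      ∪ (⋃ n ∈ Finset.Icc 1 h, Ico (ℓ (h + n)) (r n) ×ˢ Icc (0 : ℝ) (H (4 * n - 1)))
      ∪ (⋃ n ∈ Finset.Icc 1 h, Ico (r n) (ℓ n) ×ˢ Icc (0 : ℝ) (H (4 * n)))
      ∪ Ico (ℓ h) (r (2 * h + 1)) ×ˢ Icc (0 : ℝ) (H (4 * h + 1))
      ∪ Ico (r (2 * h + 1)) (ℓ (2 * h + 1)) ×ˢ Icc (0 : ℝ) (H (4 * h + 2))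
      ∪ Ico (ℓ (2 * h + 1)) (r 0) ×ˢ Icc (0 : ℝ) (H (4 * h + 3))) :
    (∫ z in Ω, 1 / (1 + z.1 * z.2) ^ 2 = Real.log ((1 + ρ) / Real.sqrt (2 - lam))) ∧
    (∫ z in Ω, 1 / (1 + z.1 * z.2) ^ 2
        = Real.log ((1 + ρ) / (2 * Real.sin (Real.pi / (2 * q))))) := by
  subst hq
  have hangle := Rosen.pi_div_cast_eq_angle h
  have hhalf : Real.pi / (2 * (2 * h + 3 : ℕ)) = Rosen.angle h / 2 := by
    rw [mul_comm, ← div_div, hangle]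
  obtain rfl : B = Rosen.B h := funext fun n => by rw [hB, mul_div_assoc, hangle, Rosen.B]
  rw [hangle] at hlam
  have P := Rosen.Admissible.of_alpha hh hlam hρ hα1 hα2
  have hregion := P.staircase_breakpoint_eq_region hℓ hr fun k =>
    P.eq_height hH4 hH4m2 hH4h3 hH4h1
  have hint : ∫ z in Ω, 1 / (1 + z.1 * z.2) ^ 2
      = Real.log ((1 + ρ) / (2 * Real.sin (Rosen.angle h / 2))) := by
    rw [← P.integral_staircase_breakpoint_eq_log, hregion, hΩ, Rosen.region]
  refine ⟨?_, hhalf ▸ hint⟩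
  rw [hint, Rosen.two_mul_sin_half_angle, hlam]
end
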